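/- Let n ∈ [1,3), 1 < p₃ < p₂ < ∞ with 1/p₂ = 1/p₃ - 1/3 and (3-n)/3 < 1/p₃ < (4-n)/3. If a ∈ 𝒮(ℝ³) with ∫_{ℝ³} a(x) dx = 0, and Πa(x) = -(1/4π)∫ (x-y)/|x-y|³ a(y) dy, then ‖(1+|x|)^n Πa‖_{L^{p₂}} ≤ C ‖(1+|x|)^n a‖_{L^{p₃}} with C depending only on n, p₃. -/

import Mathlib

open MeasureTheory Real
open scoped ENNReal SchwartzMap

noncomputable section

/-- The operator `Π a = ∇(Δ^{-1} a)`, given by the explicit kernel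
`(Πa)(x) = -(1/4π) ∫ (x-y)/|x-y|³ a(y) dy`. -/
def PiOp (a : EuclideanSpace ℝ (Fin 3) → ℝ) (x : EuclideanSpace ℝ (Fin 3)) :
    EuclideanSpace ℝ (Fin 3) :=
  (-(1 / (4 * π))) • ∫ y, (a y / ‖x - y‖ ^ 3) • (x - y)

/-!
Since `∫ a = 0`, the kernel `K (x - y)` of the field may be replaced by `K (x - y) - K x`, which
costs nothing and gains a factor `|y| / |x|` where `|y| < |x| / 2`. Where `|y| ≥ |x| / 2` or
`|x| ≤ 1`, the weight at `x` is controlled by the weight at `y`, so the term `K (x - y)` is governed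
by the Hardy–Littlewood–Sobolev inequality. The near part, and the term `K x` far out, are dominated
by a Hardy operator and a dual Hardy operator with homogeneous kernels. Each of these is bounded by
a Schur test with power weights, and the two restrictions on `1 / p₃` are the conditions for the
power integrals in it to converge.
-/

open Metric Module Set
open scoped NNReal Pointwise

section StrongType

variable {X Y : Type*} [MeasurableSpace X] [MeasurableSpace Y] {μ : Measure X} {ν : Measure Y}
  {p q : ℝ} {T T₁ T₂ : (X → ℝ≥0∞) → Y → ℝ≥0∞}

/-- An operator on nonnegative functions is of strong type `(p, q)` if it maps measurable functions
to measurable functions and is bounded from `L^p(μ)` to `L^q(ν)`. -/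
def HasStrongType (T : (X → ℝ≥0∞) → Y → ℝ≥0∞) (p q : ℝ) (μ : Measure X) (ν : Measure Y) : Prop :=
  ∃ C : ℝ≥0, ∀ f, Measurable f → Measurable (T f) ∧
    eLpNorm (T f) (ENNReal.ofReal q) ν ≤ C * eLpNorm f (ENNReal.ofReal p) μ

lemma eLpNorm_ofReal_eq_lintegral (hp : 0 < p) (f : X → ℝ≥0∞) :
    eLpNorm f (ENNReal.ofReal p) μ = (∫⁻ x, f x ^ p ∂μ) ^ (1 / p) := by
  rw [eLpNorm_eq_lintegral_rpow_enorm_toReal (by simpa using hp) ENNReal.ofReal_ne_top,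
    ENNReal.toReal_ofReal hp.le]
  simp only [enorm_eq_self]

lemma HasStrongType.of_lintegral (hp : 0 < p) (hq : 0 < q)
    (hT : ∀ f, Measurable f → Measurable (T f)) {C : ℝ≥0}
    (hC : ∀ f, Measurable f →
      ∫⁻ y, T f y ^ q ∂ν ≤ C * (∫⁻ x, f x ^ p ∂μ) ^ (q / p)) :
    HasStrongType T p q μ ν := by
  refine ⟨C ^ (1 / q), fun f hf => ⟨hT f hf, ?_⟩⟩
  rw [eLpNorm_ofReal_eq_lintegral hp, eLpNorm_ofReal_eq_lintegral hq,
    ENNReal.coe_rpow_of_nonneg _ (by positivity)]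
  calc (∫⁻ y, T f y ^ q ∂ν) ^ (1 / q)
      ≤ (C * (∫⁻ x, f x ^ p ∂μ) ^ (q / p)) ^ (1 / q) := by gcongr; exact hC f hf
    _ = C ^ (1 / q) * (∫⁻ x, f x ^ p ∂μ) ^ (1 / p) := by
        rw [ENNReal.mul_rpow_of_nonneg _ _ (by positivity), ← ENNReal.rpow_mul]
        congr 2
        field_simp

/-- A homogeneous operator need only be tested on the unit ball. -/
lemma HasStrongType.of_lintegral_le_one (hp : 0 < p) (hq : 0 < q)
    (hT : ∀ f, Measurable f → Measurable (T f))
    (hsmul : ∀ (c : ℝ≥0∞) f, Measurable f → T (c • f) = c • T f) {C : ℝ≥0}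
    (hC : ∀ f, Measurable f → ∫⁻ x, f x ^ p ∂μ ≤ 1 → ∫⁻ y, T f y ^ q ∂ν ≤ C) :
    HasStrongType T p q μ ν := by
  refine .of_lintegral hp hq hT (C := C + 1) fun f hf => ?_
  set N := (∫⁻ x, f x ^ p ∂μ) ^ (1 / p) with hN
  have hNp : N ^ p = ∫⁻ x, f x ^ p ∂μ := by
    rw [hN, ← ENNReal.rpow_mul, one_div_mul_cancel hp.ne', ENNReal.rpow_one]
  have hunit : ∫⁻ x, (N⁻¹ • f) x ^ p ∂μ ≤ 1 := by
    simp only [Pi.smul_apply, smul_eq_mul, ENNReal.mul_rpow_of_nonneg _ _ hp.le]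
    rw [lintegral_const_mul _ (hf.pow_const p), ← hNp, ENNReal.inv_rpow]
    exact ENNReal.inv_mul_le_one _
  have hscaled := hC _ (hf.const_smul N⁻¹) hunit
  simp only [hsmul _ f hf, Pi.smul_apply, smul_eq_mul,
    ENNReal.mul_rpow_of_nonneg _ _ hq.le] at hscaled
  rw [lintegral_const_mul _ ((hT f hf).pow_const q), ENNReal.inv_rpow, mul_comm,
    ← div_eq_mul_inv] at hscaled
  have hNq : (∫⁻ x, f x ^ p ∂μ) ^ (q / p) = N ^ q := by
    rw [← hNp, ← ENNReal.rpow_mul, mul_div_cancel₀ _ hp.ne']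
  rw [hNq, ← ENNReal.div_le_iff_le_mul (.inr (by simp)) (.inr (by simp))]
  exact hscaled.trans (by push_cast; exact le_self_add)

lemma HasStrongType.add (hq : 1 ≤ q) (h₁ : HasStrongType T₁ p q μ ν)
    (h₂ : HasStrongType T₂ p q μ ν) : HasStrongType (T₁ + T₂) p q μ ν := by
  obtain ⟨C₁, h₁⟩ := h₁
  obtain ⟨C₂, h₂⟩ := h₂
  refine ⟨C₁ + C₂, fun f hf => ⟨(h₁ f hf).1.add (h₂ f hf).1, ?_⟩⟩
  calc eLpNorm (T₁ f + T₂ f) (ENNReal.ofReal q) ν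
      ≤ eLpNorm (T₁ f) (ENNReal.ofReal q) ν + eLpNorm (T₂ f) (ENNReal.ofReal q) ν :=
        eLpNorm_add_le (h₁ f hf).1.aestronglyMeasurable (h₂ f hf).1.aestronglyMeasurable
          (by simpa using hq)
    _ ≤ C₁ * eLpNorm f (ENNReal.ofReal p) μ + C₂ * eLpNorm f (ENNReal.ofReal p) μ :=
        add_le_add (h₁ f hf).2 (h₂ f hf).2
    _ = (C₁ + C₂ : ℝ≥0) * eLpNorm f (ENNReal.ofReal p) μ := by push_cast; ring

end StrongType

section LayerCake

variable {X Y : Type*} [MeasurableSpace X] [MeasurableSpace Y] {μ : Measure X} {ν : Measure Y}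
  {p : ℝ} {f : X → ℝ≥0∞} {g : Y → ℝ≥0∞}

lemma lintegral_Ioi_ofReal_rpow_eq_top (s : ℝ) :
    ∫⁻ t in Ioi (0 : ℝ), ENNReal.ofReal (t ^ s) = ∞ := by
  have hnonneg : 0 ≤ᵐ[volume.restrict (Ioi (0 : ℝ))] fun t => t ^ s :=
    ae_restrict_of_forall_mem measurableSet_Ioi fun t ht => rpow_nonneg (le_of_lt ht) s
  have hmeas : Measurable fun t : ℝ => t ^ s := by fun_prop
  by_contra h
  exact not_integrableOn_Ioi_rpow s
    ((lintegral_ofReal_ne_top_iff_integrable hmeas.aestronglyMeasurable hnonneg).1 h)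

lemma lintegral_rpow_eq_lintegral_meas_ofReal_lt_mul (hf : Measurable f) (hp : 0 < p) :
    ∫⁻ x, f x ^ p ∂μ =
      ENNReal.ofReal p * ∫⁻ t in Ioi (0 : ℝ),
        μ {x | ENNReal.ofReal t < f x} * ENNReal.ofReal (t ^ (p - 1)) := by
  by_cases hfin : μ {x | f x = ∞} = 0
  · have hne : ∀ᵐ x ∂μ, f x ≠ ∞ := by simpa [ae_iff] using hfin
    have hcake := lintegral_rpow_eq_lintegral_meas_lt_mul μ (f := fun x => (f x).toReal)
      (.of_forall fun x => ENNReal.toReal_nonneg) hf.ennreal_toReal.aemeasurable hp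
    rw [lintegral_congr_ae (g := fun x => ENNReal.ofReal ((f x).toReal ^ p)), hcake]
    · congr 1
      refine setLIntegral_congr_fun measurableSet_Ioi fun t ht => ?_
      congr 1
      refine measure_congr ?_
      filter_upwards [hne] with x hx
      exact propext (ENNReal.ofReal_lt_iff_lt_toReal (le_of_lt ht) hx).symm
    · filter_upwards [hne] with x hx
      rw [← ENNReal.ofReal_rpow_of_nonneg ENNReal.toReal_nonneg hp.le, ENNReal.ofReal_toReal hx]
  · have hleft : ∫⁻ x, f x ^ p ∂μ = ∞ := by
      by_contra h
      refine hfin (measure_mono_null (fun x hx => ?_)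
        (measure_eq_top_of_lintegral_ne_top (hf.pow_const p).aemeasurable h))
      simp [show f x = ∞ from hx, hp]
    have hright : μ {x | f x = ∞} * ∫⁻ t in Ioi (0 : ℝ), ENNReal.ofReal (t ^ (p - 1)) ≤
        ∫⁻ t in Ioi (0 : ℝ), μ {x | ENNReal.ofReal t < f x} * ENNReal.ofReal (t ^ (p - 1)) := by
      rw [← lintegral_const_mul _ (by fun_prop)]
      gcongr with t x
      intro hx
      simp [hx]
    rw [lintegral_Ioi_ofReal_rpow_eq_top, ENNReal.mul_top hfin, top_le_iff] at hright
    rw [hleft, hright, ENNReal.mul_top (by simpa using hp)]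

lemma lintegral_rpow_eq_lintegral_setLIntegral_mul (hf : Measurable f) (hp : 1 < p) :
    ∫⁻ x, f x ^ p ∂μ = ENNReal.ofReal (p - 1) * ∫⁻ t in Ioi (0 : ℝ),
      (∫⁻ x in {x | ENNReal.ofReal t < f x}, f x ∂μ) * ENNReal.ofReal (t ^ (p - 1 - 1)) := by
  have hp' : 0 < p - 1 := by linarith
  have hlevel : ∀ t : ℝ, MeasurableSet {x | ENNReal.ofReal t < f x} := fun t =>
    measurableSet_lt measurable_const hf
  have hsplit : ∀ x, f x ^ p = f x * f x ^ (p - 1) := fun x => by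
    conv_lhs => rw [show p = 1 + (p - 1) by ring,
      ENNReal.rpow_add_of_nonneg _ _ zero_le_one hp'.le, ENNReal.rpow_one]
  have hcake := lintegral_rpow_eq_lintegral_meas_ofReal_lt_mul (μ := μ.withDensity f) hf hp'
  rw [lintegral_withDensity_eq_lintegral_mul _ hf (hf.pow_const _)] at hcake
  simpa only [Pi.mul_apply, ← hsplit, withDensity_apply _ (hlevel _)] using hcake

/-- Doob's `L^p` inequality: a weak-type bound of `g` against the super-level sets of `f`. -/
lemma lintegral_rpow_le_of_mul_meas_lt_le (hp : 1 < p) (hf : Measurable f) (hg : Measurable g)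
    {A : ℝ≥0}
    (h : ∀ t : ℝ, 0 < t → ENNReal.ofReal t * ν {y | ENNReal.ofReal t < g y} ≤
      A * ∫⁻ x in {x | ENNReal.ofReal t < f x}, f x ∂μ) :
    ∫⁻ y, g y ^ p ∂ν ≤ ENNReal.ofReal (p / (p - 1)) * A * ∫⁻ x, f x ^ p ∂μ := by
  have hp' : 0 < p - 1 := by linarith
  calc ∫⁻ y, g y ^ p ∂ν
      = ENNReal.ofReal p * ∫⁻ t in Ioi (0 : ℝ),
          ν {y | ENNReal.ofReal t < g y} * ENNReal.ofReal (t ^ (p - 1)) :=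
        lintegral_rpow_eq_lintegral_meas_ofReal_lt_mul hg (by linarith)
    _ ≤ ENNReal.ofReal p * ∫⁻ t in Ioi (0 : ℝ), A *
          ((∫⁻ x in {x | ENNReal.ofReal t < f x}, f x ∂μ) * ENNReal.ofReal (t ^ (p - 1 - 1))) := by
        gcongr ENNReal.ofReal p * ?_
        refine setLIntegral_mono' measurableSet_Ioi fun t (ht : 0 < t) => ?_
        have hpow : ENNReal.ofReal (t ^ (p - 1)) =
            ENNReal.ofReal t * ENNReal.ofReal (t ^ (p - 1 - 1)) := by
          rw [← ENNReal.ofReal_mul ht.le, rpow_sub_one ht.ne' (p - 1), mul_div_cancel₀ _ ht.ne']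
        rw [hpow, ← mul_assoc, mul_comm (ν _), ← mul_assoc]
        gcongr ?_ * _
        exact h t ht
    _ = ENNReal.ofReal (p / (p - 1)) * A * ∫⁻ x, f x ^ p ∂μ := by
        rw [lintegral_const_mul' _ _ ENNReal.coe_ne_top,
          lintegral_rpow_eq_lintegral_setLIntegral_mul hf hp,
          ← div_mul_cancel₀ p hp'.ne', ENNReal.ofReal_mul (by positivity)]
        field_simp
        ring

end LayerCake

section RadialPowers

variable {E : Type*} [NormedAddCommGroup E] [NormedSpace ℝ E] [FiniteDimensional ℝ E]
  [MeasurableSpace E] [BorelSpace E] (μ : Measure E) [μ.IsAddHaarMeasure] {δ r : ℝ}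

lemma setLIntegral_smul_set_enorm_rpow (δ : ℝ) (hr : 0 < r) (s : Set E) :
    ∫⁻ x in r • s, ‖x‖ₑ ^ δ ∂μ =
      ENNReal.ofReal r ^ (δ + finrank ℝ E) * ∫⁻ x in s, ‖x‖ₑ ^ δ ∂μ := by
  have hemb : MeasurableEmbedding (fun x : E => r • x) :=
    (Homeomorph.smulOfNeZero r hr.ne').measurableEmbedding
  have hmap : μ = ENNReal.ofReal (r ^ finrank ℝ E) • μ.map (fun x => r • x) := by
    rw [Measure.map_addHaar_smul μ hr.ne', smul_smul, ← ENNReal.ofReal_mul (by positivity),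
      abs_of_pos (by positivity), mul_inv_cancel₀ (by positivity), ENNReal.ofReal_one, one_smul]
  have hr0 : ENNReal.ofReal r ≠ 0 := by simpa using hr
  have hnorm : ‖r‖ₑ = ENNReal.ofReal r := Real.enorm_of_nonneg hr.le
  nth_rw 1 [hmap]
  rw [Measure.restrict_smul, lintegral_smul_measure, hemb.restrict_map,
    hemb.lintegral_map, ← image_smul, preimage_image_eq s hemb.injective,
    ENNReal.rpow_add _ _ hr0 ENNReal.ofReal_ne_top]
  simp only [enorm_smul, hnorm, ENNReal.mul_rpow_of_ne_top ENNReal.ofReal_ne_top enorm_ne_top]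
  rw [lintegral_const_mul _ (by fun_prop), ENNReal.rpow_natCast, ENNReal.ofReal_pow hr.le]
  simp only [smul_eq_mul]
  ring

lemma setLIntegral_unitClosedBall_enorm_rpow_lt_top [Nontrivial E] (hδ : -finrank ℝ E < δ) :
    ∫⁻ x in closedBall 0 1, ‖x‖ₑ ^ δ ∂μ < ∞ := by
  have hint : IntegrableOn (fun x : E => ‖x‖ ^ δ) (ball 0 2) μ :=
    integrableOn_ball_of_norm_le_rpow (C := 1) (α := -δ) finrank_pos (by linarith)
      (.of_forall fun x => by simp [abs_of_nonneg, rpow_nonneg])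
      (by fun_prop : Measurable fun x : E => ‖x‖ ^ δ).aestronglyMeasurable
  calc ∫⁻ x in closedBall 0 1, ‖x‖ₑ ^ δ ∂μ
      ≤ ∫⁻ x in ball 0 2, ‖x‖ₑ ^ δ ∂μ :=
        lintegral_mono_set (closedBall_subset_ball one_lt_two)
    _ = ∫⁻ x in ball 0 2, ENNReal.ofReal (‖x‖ ^ δ) ∂μ := by
        refine lintegral_congr_ae (ae_restrict_of_ae ?_)
        filter_upwards [Measure.ae_ne μ 0] with x hx
        rw [← ENNReal.ofReal_rpow_of_pos (norm_pos_iff.2 hx), ofReal_norm]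
    _ < ∞ := hint.lintegral_lt_top

lemma setLIntegral_compl_unitBall_enorm_rpow_lt_top (hδ : δ < -finrank ℝ E) :
    ∫⁻ x in (ball 0 1)ᶜ, ‖x‖ₑ ^ δ ∂μ < ∞ := by
  have hδ0 : δ ≤ 0 := hδ.le.trans (by simp)
  have hpoint : ∀ x ∈ (ball (0 : E) 1)ᶜ,
      ‖x‖ₑ ^ δ ≤ ENNReal.ofReal (2 ^ (-δ)) * ENNReal.ofReal ((1 + ‖x‖) ^ (-(-δ))) := by
    intro x hx
    have hx : 1 ≤ ‖x‖ := by simpa using hx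
    rw [← ofReal_norm, ENNReal.ofReal_rpow_of_pos (by linarith), neg_neg,
      ← ENNReal.ofReal_mul (by positivity)]
    refine ENNReal.ofReal_le_ofReal ?_
    calc ‖x‖ ^ δ ≤ ((1 + ‖x‖) / 2) ^ δ := rpow_le_rpow_of_nonpos (by linarith) (by linarith) hδ0
      _ = 2 ^ (-δ) * (1 + ‖x‖) ^ δ := by
          rw [div_rpow (by positivity) two_pos.le, rpow_neg two_pos.le]; ring
  calc ∫⁻ x in (ball 0 1)ᶜ, ‖x‖ₑ ^ δ ∂μ
      ≤ ∫⁻ x in (ball 0 1)ᶜ, ENNReal.ofReal (2 ^ (-δ)) * ENNReal.ofReal ((1 + ‖x‖) ^ (-(-δ))) ∂μ :=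
        setLIntegral_mono' measurableSet_ball.compl hpoint
    _ ≤ ∫⁻ x, ENNReal.ofReal (2 ^ (-δ)) * ENNReal.ofReal ((1 + ‖x‖) ^ (-(-δ))) ∂μ :=
        setLIntegral_le_lintegral _ _
    _ < ∞ := by
        rw [lintegral_const_mul' _ _ ENNReal.ofReal_ne_top]
        exact ENNReal.mul_lt_top ENNReal.ofReal_lt_top (finite_integral_one_add_norm (by linarith))

lemma exists_setLIntegral_closedBall_enorm_rpow_le [Nontrivial E] (hδ : -finrank ℝ E < δ) :
    ∃ C : ℝ≥0, ∀ r : ℝ, 0 < r →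
      ∫⁻ x in closedBall 0 r, ‖x‖ₑ ^ δ ∂μ ≤ C * ENNReal.ofReal r ^ (δ + finrank ℝ E) := by
  lift ∫⁻ x in closedBall 0 1, ‖x‖ₑ ^ δ ∂μ to ℝ≥0
    using (setLIntegral_unitClosedBall_enorm_rpow_lt_top μ hδ).ne with C hC
  refine ⟨C, fun r hr => ?_⟩
  rw [hC, mul_comm, ← setLIntegral_smul_set_enorm_rpow μ δ hr, smul_unitClosedBall_of_nonneg hr.le]

lemma exists_setLIntegral_compl_ball_enorm_rpow_le (hδ : δ < -finrank ℝ E) :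
    ∃ C : ℝ≥0, ∀ r : ℝ, 0 < r →
      ∫⁻ x in (ball 0 r)ᶜ, ‖x‖ₑ ^ δ ∂μ ≤ C * ENNReal.ofReal r ^ (δ + finrank ℝ E) := by
  lift ∫⁻ x in (ball 0 1)ᶜ, ‖x‖ₑ ^ δ ∂μ to ℝ≥0
    using (setLIntegral_compl_unitBall_enorm_rpow_lt_top μ hδ).ne with C hC
  refine ⟨C, fun r hr => ?_⟩
  rw [hC, mul_comm, ← setLIntegral_smul_set_enorm_rpow μ δ hr, ← image_smul,
    image_compl_eq (MulAction.bijective₀ hr.ne'), image_smul, smul_unitBall_of_pos hr]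

end RadialPowers

section Translation

variable {G : Type*} [MeasurableSpace G] [AddCommGroup G] [MeasurableAdd₂ G] [MeasurableNeg G]
  {μ : Measure G} {k f : G → ℝ≥0∞}

lemma measurable_lintegral_sub_mul [SFinite μ] (hk : Measurable k) (hf : Measurable f) :
    Measurable fun x => ∫⁻ y, k (x - y) * f y ∂μ :=
  Measurable.lintegral_prod_right' (f := fun z : G × G => k (z.1 - z.2) * f z.2) (by fun_prop)

variable [μ.IsAddLeftInvariant]

lemma lintegral_lintegral_sub_mul [SFinite μ] (hk : Measurable k) (hf : Measurable f) :
    ∫⁻ x, ∫⁻ y, k (x - y) * f y ∂μ ∂μ = (∫⁻ z, k z ∂μ) * ∫⁻ y, f y ∂μ := by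
  have hmeas : Measurable fun z : G × G => k (z.1 - z.2) * f z.2 := by fun_prop
  rw [lintegral_lintegral_swap hmeas.aemeasurable]
  have hinner : ∀ y, ∫⁻ x, k (x - y) * f y ∂μ = (∫⁻ z, k z ∂μ) * f y := fun y => by
    rw [lintegral_mul_const _ (by fun_prop), lintegral_sub_right_eq_self]
  simp only [hinner]
  rw [lintegral_const_mul _ hf]

lemma lintegral_sub_mul_le_Lp_mul_Lq [μ.IsNegInvariant] {p p' : ℝ} (hpp' : p.HolderConjugate p')
    (hk : Measurable k) (hf : Measurable f) (x : G) :
    ∫⁻ y, k (x - y) * f y ∂μ ≤ (∫⁻ z, k z ^ p' ∂μ) ^ (1 / p') * (∫⁻ y, f y ^ p ∂μ) ^ (1 / p) := by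
  rw [← lintegral_sub_left_eq_self (fun z => k z ^ p') x]
  exact ENNReal.lintegral_mul_le_Lp_mul_Lq μ hpp'.symm (by fun_prop) hf.aemeasurable

lemma lintegral_sub_mul_le_add [μ.IsNegInvariant] (hk : Measurable k) (hf : Measurable f)
    (t : ℝ≥0∞) (x : G) :
    ∫⁻ y, k (x - y) * f y ∂μ ≤
      ∫⁻ y, k (x - y) * {y | t < f y}.indicator f y ∂μ + (∫⁻ z, k z ∂μ) * t := by
  rw [← lintegral_sub_left_eq_self k x, ← lintegral_mul_const _ (by fun_prop),
    ← lintegral_add_left (by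
      have := hf.indicator (measurableSet_lt measurable_const hf : MeasurableSet {y | t < f y})
      fun_prop)]
  gcongr with y
  rw [← mul_add]
  gcongr
  by_cases hy : t < f y
  · simp [hy]
  · exact (not_lt.1 hy).trans le_add_self

end Translation

section RieszPotential

variable {E : Type*} [NormedAddCommGroup E] [NormedSpace ℝ E] [MeasurableSpace E]

/-- The Riesz potential `I_α f = |·|^(α - d) ⋆ f` of a nonnegative function on a space of
dimension `d`, without the customary normalizing constant. -/
def rieszPotential (μ : Measure E) (α : ℝ) (f : E → ℝ≥0∞) (x : E) : ℝ≥0∞ :=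
  ∫⁻ y, ‖x - y‖ₑ ^ (α - finrank ℝ E) * f y ∂μ

variable [BorelSpace E] [FiniteDimensional ℝ E] (μ : Measure E) {α p p' q r t : ℝ} {f : E → ℝ≥0∞}

lemma measurable_rieszPotential [SFinite μ] (α : ℝ) (hf : Measurable f) :
    Measurable (rieszPotential μ α f) :=
  measurable_lintegral_sub_mul (k := fun z => ‖z‖ₑ ^ (α - finrank ℝ E)) (by fun_prop) hf

lemma rieszPotential_smul (α : ℝ) (c : ℝ≥0∞) (hf : Measurable f) :
    rieszPotential μ α (c • f) = c • rieszPotential μ α f := by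
  ext x
  simp only [rieszPotential, Pi.smul_apply, smul_eq_mul, mul_left_comm _ c]
  exact lintegral_const_mul _ (by fun_prop)

/-- The restriction of the kernel of the Riesz potential `I_α` to a set. -/
def rieszKernelOn (α : ℝ) (s : Set E) : E → ℝ≥0∞ :=
  s.indicator fun z => ‖z‖ₑ ^ (α - finrank ℝ E)

lemma measurable_rieszKernelOn (α : ℝ) {s : Set E} (hs : MeasurableSet s) :
    Measurable (rieszKernelOn α s) :=
  Measurable.indicator (by fun_prop) hs

lemma rieszPotential_eq_add_compl (α : ℝ) (hf : Measurable f) {s : Set E} (hs : MeasurableSet s)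
    (x : E) :
    rieszPotential μ α f x = ∫⁻ y, rieszKernelOn α s (x - y) * f y ∂μ +
      ∫⁻ y, rieszKernelOn α sᶜ (x - y) * f y ∂μ := by
  have := measurable_rieszKernelOn α hs
  rw [← lintegral_add_left (by fun_prop)]
  simp only [← add_mul, rieszKernelOn, indicator_self_add_compl_apply]
  rfl

lemma rieszPotential_le_add [μ.IsAddLeftInvariant] [μ.IsNegInvariant] (α : ℝ)
    (hpp' : p.HolderConjugate p') (hf : Measurable f) {s : Set E} (hs : MeasurableSet s)
    (t : ℝ≥0∞) (x : E) :
    rieszPotential μ α f x ≤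
      ∫⁻ y, rieszKernelOn α s (x - y) * {y | t < f y}.indicator f y ∂μ +
        ((∫⁻ z, rieszKernelOn α s z ∂μ) * t +
          (∫⁻ z, rieszKernelOn α sᶜ z ^ p' ∂μ) ^ (1 / p') * (∫⁻ y, f y ^ p ∂μ) ^ (1 / p)) := by
  rw [rieszPotential_eq_add_compl μ α hf hs, ← add_assoc]
  gcongr
  · exact lintegral_sub_mul_le_add (measurable_rieszKernelOn α hs) hf t x
  · exact lintegral_sub_mul_le_Lp_mul_Lq hpp' (measurable_rieszKernelOn α hs.compl) hf x

lemma mul_meas_lt_rieszPotential_le [SFinite μ] [μ.IsAddLeftInvariant] [μ.IsNegInvariant] (α : ℝ)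
    (hpp' : p.HolderConjugate p') (hf : Measurable f) {s : Set E} (hs : MeasurableSet s)
    (t ε : ℝ≥0∞) :
    ε * μ {x | ε + ((∫⁻ z, rieszKernelOn α s z ∂μ) * t +
        (∫⁻ z, rieszKernelOn α sᶜ z ^ p' ∂μ) ^ (1 / p') * (∫⁻ y, f y ^ p ∂μ) ^ (1 / p)) <
          rieszPotential μ α f x} ≤
      (∫⁻ z, rieszKernelOn α s z ∂μ) * ∫⁻ x in {x | t < f x}, f x ∂μ := by
  have hlevel : MeasurableSet {y | t < f y} := measurableSet_lt measurable_const hf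
  have hk := measurable_rieszKernelOn α hs
  rw [← lintegral_indicator hlevel, ← lintegral_lintegral_sub_mul hk (hf.indicator hlevel)]
  refine le_trans ?_
    (mul_meas_ge_le_lintegral (measurable_lintegral_sub_mul hk (hf.indicator hlevel)) ε)
  gcongr with x
  exact fun hx => (lt_of_add_lt_add_right
    (hx.trans_le (rieszPotential_le_add μ α hpp' hf hs t x))).le

variable [μ.IsAddHaarMeasure]

lemma exists_lintegral_rieszKernelOn_closedBall_le [Nontrivial E] (hα : 0 < α) :
    ∃ A : ℝ≥0, ∀ r : ℝ, 0 < r →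
      ∫⁻ z, rieszKernelOn α (closedBall (0 : E) r) z ∂μ ≤ A * ENNReal.ofReal r ^ α := by
  obtain ⟨A, hA⟩ := exists_setLIntegral_closedBall_enorm_rpow_le μ
    (show -(finrank ℝ E : ℝ) < α - finrank ℝ E by linarith)
  refine ⟨A, fun r hr => ?_⟩
  rw [rieszKernelOn, lintegral_indicator measurableSet_closedBall]
  simpa using hA r hr

lemma exists_lintegral_rieszKernelOn_compl_rpow_le (hpp' : p.HolderConjugate p')
    (hα : α < finrank ℝ E / p) :
    ∃ B : ℝ≥0, ∀ r : ℝ, 0 < r →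
      (∫⁻ z, rieszKernelOn α (closedBall (0 : E) r)ᶜ z ^ p' ∂μ) ^ (1 / p') ≤
        B * ENNReal.ofReal r ^ (α - finrank ℝ E / p) := by
  have hp' := hpp'.symm.pos
  have hexp : (α - finrank ℝ E) * p' + finrank ℝ E = (α - finrank ℝ E / p) * p' := by
    have := hpp'.inv_add_inv_eq_one
    field_simp at this ⊢
    linear_combination (finrank ℝ E : ℝ) * this
  obtain ⟨B, hB⟩ := exists_setLIntegral_compl_ball_enorm_rpow_le μ
    (show (α - finrank ℝ E) * p' < -finrank ℝ E by nlinarith)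
  refine ⟨B ^ (1 / p'), fun r hr => ?_⟩
  calc (∫⁻ z, rieszKernelOn α (closedBall (0 : E) r)ᶜ z ^ p' ∂μ) ^ (1 / p')
      ≤ (∫⁻ z in (ball 0 r)ᶜ, ‖z‖ₑ ^ ((α - finrank ℝ E) * p') ∂μ) ^ (1 / p') := by
        rw [← lintegral_indicator measurableSet_ball.compl]
        gcongr with z
        simp only [rieszKernelOn, indicator]
        split_ifs with hz hz'
        · exact (ENNReal.rpow_mul _ _ _).ge
        · exact absurd (ball_subset_closedBall (by simpa using hz')) hz
        · simp [hp']
        · simp [hp']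
    _ ≤ (B * ENNReal.ofReal r ^ ((α - finrank ℝ E) * p' + finrank ℝ E)) ^ (1 / p') := by
        gcongr
        exact hB r hr
    _ = (B ^ (1 / p') : ℝ≥0) * ENNReal.ofReal r ^ (α - finrank ℝ E / p) := by
        rw [hexp, ENNReal.mul_rpow_of_nonneg _ _ (by positivity), ← ENNReal.rpow_mul,
          ENNReal.coe_rpow_of_nonneg _ (by positivity)]
        field_simp

/-- At height `t` the kernel is cut at the radius `r = t^(-p/d)`, for which the near part of
`min f t` and the far part of `f` contribute equally. -/
lemma exists_rieszKernelOn_le_rpow [Nontrivial E] (hpp' : p.HolderConjugate p') (hα : 0 < α)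
    (hq : 0 < q) (hpq : 1 / q = 1 / p - α / finrank ℝ E) :
    ∃ A B : ℝ≥0, ∀ t : ℝ, 0 < t → ∃ s : Set E, MeasurableSet s ∧
      ∫⁻ z, rieszKernelOn α s z ∂μ ≤ A * ENNReal.ofReal t ^ (p / q - 1) ∧
      (∫⁻ z, rieszKernelOn α sᶜ z ^ p' ∂μ) ^ (1 / p') ≤ B * ENNReal.ofReal t ^ (p / q) := by
  have hp := hpp'.pos
  have hd : (0 : ℝ) < finrank ℝ E := by exact_mod_cast finrank_pos (R := ℝ) (M := E)
  have hαp : α < finrank ℝ E / p := by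
    have : 0 < 1 / p - α / finrank ℝ E := hpq ▸ by positivity
    field_simp at this ⊢
    linarith
  have hnear : -p / finrank ℝ E * α = p / q - 1 := by
    rw [← mul_one_div p q, hpq]; field_simp; ring
  have hfar : -p / finrank ℝ E * (α - finrank ℝ E / p) = p / q := by
    rw [← mul_one_div p q, hpq]; field_simp; ring
  obtain ⟨A, hA⟩ := exists_lintegral_rieszKernelOn_closedBall_le μ hα
  obtain ⟨B, hB⟩ := exists_lintegral_rieszKernelOn_compl_rpow_le μ hpp' hαp
  refine ⟨A, B, fun t ht =>
    ⟨closedBall 0 (t ^ (-p / finrank ℝ E)), measurableSet_closedBall, ?_, ?_⟩⟩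
  · rw [← hnear, ENNReal.rpow_mul, ENNReal.ofReal_rpow_of_pos ht]
    exact hA _ (by positivity)
  · rw [← hfar, ENNReal.rpow_mul, ENNReal.ofReal_rpow_of_pos ht]
    exact hB _ (by positivity)

lemma exists_mul_meas_lt_rieszPotential_le [Nontrivial E] (hp : 1 < p) (hα : 0 < α) (hq : 0 < q)
    (hpq : 1 / q = 1 / p - α / finrank ℝ E) :
    ∃ A K : ℝ≥0, K ≠ 0 ∧ ∀ f, Measurable f → ∫⁻ x, f x ^ p ∂μ ≤ 1 → ∀ t : ℝ, 0 < t →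
      ENNReal.ofReal t * μ {x | K * ENNReal.ofReal t ^ (p / q) < rieszPotential μ α f x} ≤
        A * ∫⁻ x in {x | ENNReal.ofReal t < f x}, f x ∂μ := by
  have hp' := Real.HolderConjugate.conjExponent hp
  obtain ⟨A, B, hAB⟩ := exists_rieszKernelOn_le_rpow μ hp' hα hq hpq
  refine ⟨A, 1 + (A + B), by positivity, fun f hf hf1 t ht => ?_⟩
  obtain ⟨s, hs, hnear, hfar⟩ := hAB t ht
  have hT0 : ENNReal.ofReal t ≠ 0 := by simpa using ht
  have hTtop : ENNReal.ofReal t ≠ ∞ := ENNReal.ofReal_ne_top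
  set T := ENNReal.ofReal t
  have hlevel : T ^ (p / q) + ((∫⁻ z, rieszKernelOn α s z ∂μ) * T +
      (∫⁻ z, rieszKernelOn α sᶜ z ^ p.conjExponent ∂μ) ^ (1 / p.conjExponent) *
        (∫⁻ y, f y ^ p ∂μ) ^ (1 / p)) ≤ (1 + (A + B) : ℝ≥0) * T ^ (p / q) := by
    calc _ ≤ T ^ (p / q) + (A * T ^ (p / q - 1) * T + B * T ^ (p / q) * 1) := by
          gcongr
          exact ENNReal.rpow_le_one hf1 (by positivity)
      _ = (1 + (A + B) : ℝ≥0) * T ^ (p / q) := by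
          rw [ENNReal.rpow_sub _ _ hT0 hTtop, ENNReal.rpow_one, mul_assoc,
            ENNReal.div_mul_cancel hT0 hTtop]
          push_cast
          ring
  calc T * μ {x | (1 + (A + B) : ℝ≥0) * T ^ (p / q) < rieszPotential μ α f x}
      = T ^ (1 - p / q) * (T ^ (p / q) *
          μ {x | (1 + (A + B) : ℝ≥0) * T ^ (p / q) < rieszPotential μ α f x}) := by
        rw [← mul_assoc, ← ENNReal.rpow_add _ _ hT0 hTtop, sub_add_cancel, ENNReal.rpow_one]
    _ ≤ T ^ (1 - p / q) * (A * T ^ (p / q - 1) * ∫⁻ x in {x | T < f x}, f x ∂μ) := by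
        gcongr T ^ (1 - p / q) * ?_
        refine le_trans ?_ ((mul_meas_lt_rieszPotential_le μ α hp' hf hs T (T ^ (p / q))).trans
          (by gcongr))
        gcongr
    _ = A * ∫⁻ x in {x | T < f x}, f x ∂μ := by
        rw [← mul_assoc, mul_left_comm, ← ENNReal.rpow_add _ _ hT0 hTtop]
        simp

/-- The Hardy–Littlewood–Sobolev inequality. -/
theorem hasStrongType_rieszPotential [Nontrivial E] (hp : 1 < p) (hpq : p < q)
    (hα : 1 / q = 1 / p - α / finrank ℝ E) :
    HasStrongType (rieszPotential μ α) p q μ μ := by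
  have hq : 0 < q := by linarith
  have hd : (0 : ℝ) < finrank ℝ E := by exact_mod_cast finrank_pos (R := ℝ) (M := E)
  have hα0 : 0 < α := by
    have := one_div_lt_one_div_of_lt (by linarith) hpq
    exact (div_pos_iff_of_pos_right hd).1 (by linarith)
  obtain ⟨A, K, hK, hAK⟩ := exists_mul_meas_lt_rieszPotential_le μ hp hα0 hq hα
  refine .of_lintegral_le_one (by linarith) hq (fun f => measurable_rieszPotential μ α)
    (fun c f => rieszPotential_smul μ α c)
    (C := K ^ q * ((p / (p - 1)).toNNReal * A)) fun f hf hf1 => ?_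
  have hK0 : (K : ℝ≥0∞) ≠ 0 := by exact_mod_cast hK
  set g : E → ℝ≥0∞ := fun x => (rieszPotential μ α f x / K) ^ (p / q)⁻¹ with hg
  have hgp : ∀ x, rieszPotential μ α f x ^ q = K ^ q * g x ^ p := fun x => by
    rw [hg, ← ENNReal.rpow_mul, inv_div, div_mul_cancel₀ _ (by positivity),
      ← ENNReal.mul_rpow_of_nonneg _ _ hq.le, ENNReal.mul_div_cancel hK0 ENNReal.coe_ne_top]
  have hlevel : ∀ t : ℝ, {x | ENNReal.ofReal t < g x} =
      {x | K * ENNReal.ofReal t ^ (p / q) < rieszPotential μ α f x} := fun t => by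
    ext x
    rw [mem_ofPred_eq, mem_ofPred_eq, mul_comm, ENNReal.lt_rpow_inv_iff (by positivity),
      ENNReal.lt_div_iff_mul_lt (.inl hK0) (.inl ENNReal.coe_ne_top)]
  calc ∫⁻ x, rieszPotential μ α f x ^ q ∂μ
      = K ^ q * ∫⁻ x, g x ^ p ∂μ := by
        simp only [hgp]
        exact lintegral_const_mul' _ _ (by simp [hq.le])
    _ ≤ K ^ q * (ENNReal.ofReal (p / (p - 1)) * A * ∫⁻ x, f x ^ p ∂μ) := by
        gcongr
        exact lintegral_rpow_le_of_mul_meas_lt_le hp hf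
          (((measurable_rieszPotential μ α hf).div_const _).pow_const _)
          fun t ht => hlevel t ▸ hAK f hf hf1 t ht
    _ ≤ K ^ q * (ENNReal.ofReal (p / (p - 1)) * A * 1) := by gcongr
    _ = (K ^ q * ((p / (p - 1)).toNNReal * A) : ℝ≥0) := by
        rw [mul_one, ENNReal.coe_mul, ENNReal.coe_mul, ENNReal.coe_rpow_of_nonneg _ hq.le]
        rfl

end RieszPotential

section SchurTest

variable {X Y : Type*} [MeasurableSpace X] [MeasurableSpace Y] {μ : Measure X} {ν : Measure Y}
  {p p' q : ℝ} {f : Y → ℝ≥0∞}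

lemma lintegral_mul_mul_rpow_le (hpp' : p.HolderConjugate p') (hpq : p ≤ q) {k l : Y → ℝ≥0∞}
    (hk : Measurable k) (hl : Measurable l) (hf : Measurable f) {a m : ℝ≥0∞}
    (hka : (∫⁻ y, k y ^ p' ∂ν) ^ (1 / p') ≤ a) (hlm : ∀ᵐ y ∂ν, l y ^ p ≤ m) :
    (∫⁻ y, k y * (l y * f y) ∂ν) ^ q ≤
      (∫⁻ y, f y ^ p ∂ν) ^ (q / p - 1) *
        (a ^ q * m ^ (q / p - 1) * ∫⁻ y, (l y * f y) ^ p ∂ν) := by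
  have hp := hpp'.pos
  have hq : 0 < q := hp.trans_le hpq
  have hqp : 0 ≤ q / p - 1 := by rw [sub_nonneg, one_le_div hp]; exact hpq
  set J := ∫⁻ y, (l y * f y) ^ p ∂ν
  have hJ : J ≤ m * ∫⁻ y, f y ^ p ∂ν := by
    rw [← lintegral_const_mul _ (hf.pow_const p)]
    refine lintegral_mono_ae (hlm.mono fun y hy => ?_)
    rw [ENNReal.mul_rpow_of_nonneg _ _ hp.le]
    gcongr
  calc (∫⁻ y, k y * (l y * f y) ∂ν) ^ q ≤ (a * J ^ (1 / p)) ^ q := by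
        gcongr
        refine (ENNReal.lintegral_mul_le_Lp_mul_Lq ν hpp'.symm hk.aemeasurable
          (hl.mul hf).aemeasurable).trans ?_
        gcongr
        rfl
    _ = a ^ q * (J ^ (q / p - 1) * J) := by
        rw [ENNReal.mul_rpow_of_nonneg _ _ hq.le, ← ENNReal.rpow_mul, one_div_mul_eq_div]
        conv_lhs => rw [← sub_add_cancel (q / p) 1,
          ENNReal.rpow_add_of_nonneg _ _ hqp zero_le_one, ENNReal.rpow_one]
    _ ≤ a ^ q * ((m * ∫⁻ y, f y ^ p ∂ν) ^ (q / p - 1) * J) := by gcongr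
    _ = (∫⁻ y, f y ^ p ∂ν) ^ (q / p - 1) * (a ^ q * m ^ (q / p - 1) * J) := by
        rw [ENNReal.mul_rpow_of_nonneg _ _ hqp]; ring

variable [SFinite μ] [SFinite ν] {K L : X → Y → ℝ≥0∞} {A M : X → ℝ≥0∞} {C : ℝ≥0∞}

lemma lintegral_mul_lintegral_mul_rpow (hp : 0 ≤ p) (hL : Measurable (Function.uncurry L))
    (hf : Measurable f) (hA : Measurable A) :
    ∫⁻ x, A x * ∫⁻ y, (L x y * f y) ^ p ∂ν ∂μ =
      ∫⁻ y, (∫⁻ x, A x * L x y ^ p ∂μ) * f y ^ p ∂ν := by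
  have hmeas : Measurable fun z : X × Y => L z.1 z.2 := hL
  have hmeasl : ∀ x, Measurable (L x) := fun x => hL.of_uncurry_left
  have hmeasr : ∀ y, Measurable fun x => L x y := fun y => hL.of_uncurry_right
  calc ∫⁻ x, A x * ∫⁻ y, (L x y * f y) ^ p ∂ν ∂μ
      = ∫⁻ x, ∫⁻ y, A x * L x y ^ p * f y ^ p ∂ν ∂μ := by
        refine lintegral_congr fun x => ?_
        have := hmeasl x
        rw [← lintegral_const_mul _ (by fun_prop)]
        simp only [ENNReal.mul_rpow_of_nonneg _ _ hp, mul_assoc]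
    _ = ∫⁻ y, ∫⁻ x, A x * L x y ^ p * f y ^ p ∂μ ∂ν :=
        lintegral_lintegral_swap (Measurable.aemeasurable (by fun_prop))
    _ = ∫⁻ y, (∫⁻ x, A x * L x y ^ p ∂μ) * f y ^ p ∂ν :=
        lintegral_congr fun y => lintegral_mul_const _ (by have := hmeasr y; fun_prop)

/-- An off-diagonal Schur test: Hölder's inequality on the factor `K`, and Tonelli's theorem after
trading the surplus power `q / p - 1` of `∫ L ^ p * f ^ p` for a supremum of `L`. -/
lemma lintegral_lintegral_mul_rpow_le_of_schur (hpp' : p.HolderConjugate p') (hpq : p ≤ q)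
    (hK : Measurable (Function.uncurry K)) (hL : Measurable (Function.uncurry L))
    (hf : Measurable f) (hA : Measurable A) (hM : Measurable M)
    (hKA : ∀ᵐ x ∂μ, (∫⁻ y, K x y ^ p' ∂ν) ^ (1 / p') ≤ A x)
    (hLM : ∀ᵐ x ∂μ, ∀ᵐ y ∂ν, L x y ^ p ≤ M x)
    (hC : ∀ᵐ y ∂ν, ∫⁻ x, A x ^ q * M x ^ (q / p - 1) * L x y ^ p ∂μ ≤ C) :
    ∫⁻ x, (∫⁻ y, K x y * (L x y * f y) ∂ν) ^ q ∂μ ≤ C * (∫⁻ y, f y ^ p ∂ν) ^ (q / p) := by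
  have hp := hpp'.pos
  have hqp : 0 ≤ q / p - 1 := by rw [sub_nonneg, one_le_div hp]; exact hpq
  set N := ∫⁻ y, f y ^ p ∂ν
  have : Measurable fun x => ∫⁻ y, (L x y * f y) ^ p ∂ν := by
    have : Measurable fun z : X × Y => L z.1 z.2 := hL
    exact Measurable.lintegral_prod_right' (f := fun z : X × Y => (L z.1 z.2 * f z.2) ^ p)
      (by fun_prop)
  calc ∫⁻ x, (∫⁻ y, K x y * (L x y * f y) ∂ν) ^ q ∂μ
      ≤ ∫⁻ x, N ^ (q / p - 1) *
          (A x ^ q * M x ^ (q / p - 1) * ∫⁻ y, (L x y * f y) ^ p ∂ν) ∂μ := by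
        refine lintegral_mono_ae ?_
        filter_upwards [hKA, hLM] with x hKx hLx
        exact lintegral_mul_mul_rpow_le hpp' hpq hK.of_uncurry_left hL.of_uncurry_left hf hKx hLx
    _ = N ^ (q / p - 1) *
          ∫⁻ y, (∫⁻ x, A x ^ q * M x ^ (q / p - 1) * L x y ^ p ∂μ) * f y ^ p ∂ν := by
        rw [lintegral_const_mul _ (by fun_prop),
          lintegral_mul_lintegral_mul_rpow hp.le hL hf (by fun_prop)]
    _ ≤ N ^ (q / p - 1) * ∫⁻ y, C * f y ^ p ∂ν := by
        gcongr N ^ (q / p - 1) * ?_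
        exact lintegral_mono_ae (hC.mono fun y hy => by gcongr)
    _ = C * (N ^ (q / p - 1) * N ^ (1 : ℝ)) := by
        rw [lintegral_const_mul _ (hf.pow_const p), ENNReal.rpow_one]; ring
    _ = C * N ^ (q / p) := by
        rw [← ENNReal.rpow_add_of_nonneg _ _ hqp zero_le_one, sub_add_cancel]

end SchurTest

section HardyOperators

lemma ennreal_rpow_le_rpow_of_nonpos {a b : ℝ≥0∞} {z : ℝ} (hz : z ≤ 0) (hab : a ≤ b) :
    b ^ z ≤ a ^ z := by
  have : 0 ≤ -z := by linarith
  rw [← neg_neg z, ENNReal.rpow_neg, ENNReal.rpow_neg a]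
  gcongr

lemma ofReal_mul_norm_rpow {E : Type*} [SeminormedAddCommGroup E] {c : ℝ} (hc : 0 < c) (x : E)
    (e : ℝ) : ENNReal.ofReal (c * ‖x‖) ^ e = (c.toNNReal ^ e : ℝ≥0) * ‖x‖ₑ ^ e := by
  rw [ENNReal.ofReal_mul hc.le, ofReal_norm, ENNReal.mul_rpow_of_ne_top (by simp) (by simp),
    ENNReal.coe_rpow_of_ne_zero (by simpa)]
  rfl

lemma measurableSet_mem_ball_mul_norm {E : Type*} [SeminormedAddCommGroup E] [MeasurableSpace E]
    [OpensMeasurableSpace E] (c : ℝ) : MeasurableSet {z : E × E | z.2 ∈ ball 0 (c * ‖z.1‖)} := by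
  simp only [mem_ball_zero_iff]
  exact measurableSet_lt (by fun_prop) (by fun_prop)

lemma lintegral_mul_indicator_enorm_rpow_le {E : Type*} [NormedAddCommGroup E] [MeasurableSpace E]
    {μ : Measure E} {p s : ℝ} (hp : 0 < p) {t : Set E} (ht : MeasurableSet t)
    {w : E → ℝ≥0∞} (hw : Measurable w) {y : E} (hy : y ≠ 0) {C : ℝ≥0∞}
    (hC : ∫⁻ x in t, w x ∂μ ≤ C * ‖y‖ₑ ^ (-(s * p))) :
    ∫⁻ x, w x * t.indicator (fun _ => ‖y‖ₑ ^ s) x ^ p ∂μ ≤ C := by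
  have hy0 : ‖y‖ₑ ≠ 0 := by simpa using hy
  calc ∫⁻ x, w x * t.indicator (fun _ => ‖y‖ₑ ^ s) x ^ p ∂μ
      = (∫⁻ x in t, w x ∂μ) * ‖y‖ₑ ^ (s * p) := by
        rw [← lintegral_mul_const _ hw, ← lintegral_indicator ht]
        congr! with x
        by_cases hx : x ∈ t
        · simp only [indicator_of_mem hx, ENNReal.rpow_mul]
        · simp [indicator_of_notMem hx, hp]
    _ ≤ C * ‖y‖ₑ ^ (-(s * p)) * ‖y‖ₑ ^ (s * p) := by gcongr
    _ = C := by rw [mul_assoc, ← ENNReal.rpow_add _ _ hy0 enorm_ne_top]; simp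

lemma schur_weight_eq {E : Type*} [NormedAddCommGroup E] [NormedSpace ℝ E] {α p q : ℝ} (hp : 0 < p)
    (hpq : p ≤ q) (hα : 1 / q = 1 / p - α / finrank ℝ E) (hd : finrank ℝ E ≠ 0) {x : E}
    (hx : x ≠ 0) (s : ℝ) (a b : ℝ≥0∞) :
    (a * ‖x‖ₑ ^ (α - finrank ℝ E / p - s)) ^ q * (b * ‖x‖ₑ ^ (s * p)) ^ (q / p - 1) =
      a ^ q * b ^ (q / p - 1) * ‖x‖ₑ ^ (-(s * p) - finrank ℝ E) := by
  have hq : 0 < q := hp.trans_le hpq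
  have hexp : (α - finrank ℝ E / p - s) * q + s * p * (q / p - 1) = -(s * p) - finrank ℝ E := by
    have hd : (finrank ℝ E : ℝ) ≠ 0 := by exact_mod_cast hd
    field_simp at hα ⊢
    linear_combination hα
  rw [ENNReal.mul_rpow_of_nonneg _ _ hq.le, ENNReal.mul_rpow_of_nonneg _ _
    (by rw [sub_nonneg, one_le_div hp]; exact hpq), mul_mul_mul_comm, ← ENNReal.rpow_mul,
    ← ENNReal.rpow_mul, ← ENNReal.rpow_add _ _ (by simpa using hx) enorm_ne_top, hexp]

variable {E : Type*} [NormedAddCommGroup E] [NormedSpace ℝ E] [MeasurableSpace E]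

lemma lintegral_indicator_enorm_rpow_le [BorelSpace E] {μ : Measure E} {δ p p' : ℝ}
    (hpp' : p.HolderConjugate p') {s : Set E} (hs : MeasurableSet s) {x : E} (hx : x ≠ 0)
    (γ : ℝ) {C : ℝ≥0∞}
    (hC : ∫⁻ y in s, ‖y‖ₑ ^ (δ * p') ∂μ ≤ C * ‖x‖ₑ ^ (δ * p' + finrank ℝ E)) :
    (∫⁻ y, s.indicator (fun y => ‖x‖ₑ ^ γ * ‖y‖ₑ ^ δ) y ^ p' ∂μ) ^ (1 / p') ≤
      C ^ (1 / p') * ‖x‖ₑ ^ (γ + δ + finrank ℝ E / p') := by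
  have hp' := hpp'.symm.pos
  have hx0 : ‖x‖ₑ ≠ 0 := by simpa using hx
  calc (∫⁻ y, s.indicator (fun y => ‖x‖ₑ ^ γ * ‖y‖ₑ ^ δ) y ^ p' ∂μ) ^ (1 / p')
      = ((‖x‖ₑ ^ γ) ^ p' * ∫⁻ y in s, ‖y‖ₑ ^ (δ * p') ∂μ) ^ (1 / p') := by
        rw [← lintegral_const_mul _ (by fun_prop), ← lintegral_indicator hs]
        congr! 3 with y
        by_cases hy : y ∈ s
        · simp only [indicator_of_mem hy, ENNReal.mul_rpow_of_nonneg _ _ hp'.le, ENNReal.rpow_mul]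
        · simp [indicator_of_notMem hy, hp']
    _ ≤ ((‖x‖ₑ ^ γ) ^ p' * (C * ‖x‖ₑ ^ (δ * p' + finrank ℝ E))) ^ (1 / p') := by gcongr
    _ = C ^ (1 / p') * (‖x‖ₑ ^ γ * ‖x‖ₑ ^ (δ + finrank ℝ E / p')) := by
        simp only [ENNReal.mul_rpow_of_nonneg _ _ (one_div_pos.2 hp').le, ← ENNReal.rpow_mul]
        rw [mul_left_comm]
        congr! 3 <;> field_simp
    _ = C ^ (1 / p') * ‖x‖ₑ ^ (γ + δ + finrank ℝ E / p') := by
        rw [← ENNReal.rpow_add _ _ hx0 enorm_ne_top, add_assoc]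

lemma lintegral_schur_weight_mul_indicator_le [BorelSpace E] {μ : Measure E} [NullSingletonClass μ]
    {α p q s : ℝ} (hp : 0 < p) (hpq : p ≤ q) (hα : 1 / q = 1 / p - α / finrank ℝ E)
    (hd : finrank ℝ E ≠ 0) (a b : ℝ≥0∞) {t : Set E} (ht : MeasurableSet t) {y : E} (hy : y ≠ 0)
    {C : ℝ≥0∞} (hC : ∫⁻ x in t, ‖x‖ₑ ^ (-(s * p) - finrank ℝ E) ∂μ ≤ C * ‖y‖ₑ ^ (-(s * p))) :
    ∫⁻ x, (a * ‖x‖ₑ ^ (α - finrank ℝ E / p - s)) ^ q * (b * ‖x‖ₑ ^ (s * p)) ^ (q / p - 1) *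
      t.indicator (fun _ => ‖y‖ₑ ^ s) x ^ p ∂μ ≤ a ^ q * b ^ (q / p - 1) * C := by
  calc _ = ∫⁻ x, a ^ q * b ^ (q / p - 1) * ‖x‖ₑ ^ (-(s * p) - finrank ℝ E) *
        t.indicator (fun _ => ‖y‖ₑ ^ s) x ^ p ∂μ := by
        refine lintegral_congr_ae ?_
        filter_upwards [Measure.ae_ne μ 0] with x hx
        rw [schur_weight_eq hp hpq hα hd hx]
    _ ≤ a ^ q * b ^ (q / p - 1) * C := by
        refine lintegral_mul_indicator_enorm_rpow_le hp ht (by fun_prop) hy ?_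
        rw [lintegral_const_mul _ (by fun_prop), mul_assoc _ C]
        gcongr

/-- The operator with kernel `|x| ^ (α - d - β) |y| ^ β`, homogeneous of degree `α - d`, on the
region `y ∈ S x`. It is a Hardy operator if `S x` is a ball of radius proportional to `|x|`, and a
dual Hardy operator if `S x` is the complement of such a ball. -/
def hardyOp (μ : Measure E) (α β : ℝ) (S : E → Set E) (f : E → ℝ≥0∞) (x : E) : ℝ≥0∞ :=
  ‖x‖ₑ ^ (α - finrank ℝ E - β) * ∫⁻ y in S x, ‖y‖ₑ ^ β * f y ∂μ

variable [BorelSpace E] [FiniteDimensional ℝ E] (μ : Measure E) [μ.IsAddHaarMeasure]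
  {α β c p p' q s : ℝ} {f : E → ℝ≥0∞} {S : E → Set E}

lemma measurable_hardyOp (α β : ℝ) (hf : Measurable f)
    (hS : MeasurableSet {z : E × E | z.2 ∈ S z.1}) : Measurable (hardyOp μ α β S f) := by
  have hSx : ∀ x, MeasurableSet (S x) := fun x => measurable_prodMk_left hS
  have : Measurable fun x => ∫⁻ y in S x, ‖y‖ₑ ^ β * f y ∂μ := by
    simp only [← lintegral_indicator (hSx _)]
    exact Measurable.lintegral_prod_right' (f := {z : E × E | z.2 ∈ S z.1}.indicator
      fun z => ‖z.2‖ₑ ^ β * f z.2) (.indicator (by fun_prop) hS)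
  unfold hardyOp
  fun_prop

lemma hardyOp_eq_lintegral_indicator_mul [Nontrivial E] (α β s : ℝ) (hf : Measurable f) {x : E}
    (hS : MeasurableSet (S x)) :
    hardyOp μ α β S f x =
      ∫⁻ y, (S x).indicator (fun y => ‖x‖ₑ ^ (α - finrank ℝ E - β) * ‖y‖ₑ ^ (β - s)) y *
        ((S x).indicator (fun y => ‖y‖ₑ ^ s) y * f y) ∂μ := by
  rw [hardyOp, ← lintegral_indicator hS, ← lintegral_const_mul _ (.indicator (by fun_prop) hS)]
  refine lintegral_congr_ae ?_
  filter_upwards [Measure.ae_ne μ 0] with y hy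
  by_cases hyS : y ∈ S x
  · have : ‖y‖ₑ ^ β = ‖y‖ₑ ^ (β - s) * ‖y‖ₑ ^ s := by
      rw [← ENNReal.rpow_add _ _ (by simpa using hy) enorm_ne_top, sub_add_cancel]
    simp only [indicator_of_mem hyS, this, mul_assoc]
  · simp only [indicator_of_notMem hyS, mul_zero, zero_mul]

/-- The Schur test for `hardyOp`, with the factor `|y| ^ s` of the kernel split off. -/
lemma hasStrongType_hardyOp_of_schur [Nontrivial E] (hpp' : p.HolderConjugate p') (hpq : p ≤ q)
    (hα : 1 / q = 1 / p - α / finrank ℝ E) (hS : MeasurableSet {z : E × E | z.2 ∈ S z.1})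
    {C₁ C₂ C₃ : ℝ≥0}
    (hsec : ∀ x ≠ 0, ∫⁻ y in S x, ‖y‖ₑ ^ ((β - s) * p') ∂μ ≤
      C₁ * ‖x‖ₑ ^ ((β - s) * p' + finrank ℝ E))
    (hcmp : ∀ x, ∀ y ∈ S x, ‖y‖ₑ ^ s ≤ C₂ * ‖x‖ₑ ^ s)
    (hdual : ∀ y ≠ 0, ∫⁻ x in {x | y ∈ S x}, ‖x‖ₑ ^ (-(s * p) - finrank ℝ E) ∂μ ≤
      C₃ * ‖y‖ₑ ^ (-(s * p))) :
    HasStrongType (hardyOp μ α β S) p q μ μ := by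
  have hp := hpp'.pos
  have hp' := hpp'.symm.pos
  have hq := hp.trans_le hpq
  have hqp : 0 ≤ q / p - 1 := by rw [sub_nonneg, one_le_div hp]; exact hpq
  have hSx : ∀ x, MeasurableSet (S x) := fun x => measurable_prodMk_left hS
  have hA : α - finrank ℝ E - β + (β - s) + finrank ℝ E / p' = α - finrank ℝ E / p - s := by
    have := hpp'.inv_add_inv_eq_one
    linear_combination (finrank ℝ E : ℝ) * this
  refine .of_lintegral hp hq (fun f hf => measurable_hardyOp μ α β hf hS)
    (C := (C₁ ^ (1 / p')) ^ q * (C₂ ^ p) ^ (q / p - 1) * C₃) fun f hf => ?_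
  simp only [hardyOp_eq_lintegral_indicator_mul μ α β s hf (hSx _)]
  refine lintegral_lintegral_mul_rpow_le_of_schur hpp' hpq
    (K := fun x => (S x).indicator fun y => ‖x‖ₑ ^ (α - finrank ℝ E - β) * ‖y‖ₑ ^ (β - s))
    (L := fun x => (S x).indicator fun y => ‖y‖ₑ ^ s)
    (A := fun x => C₁ ^ (1 / p') * ‖x‖ₑ ^ (α - finrank ℝ E / p - s))
    (M := fun x => C₂ ^ p * ‖x‖ₑ ^ (s * p)) ?_ ?_ hf (by fun_prop) (by fun_prop) ?_ ?_ ?_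
  · exact Measurable.indicator (s := {z : E × E | z.2 ∈ S z.1})
      (f := fun z => ‖z.1‖ₑ ^ (α - finrank ℝ E - β) * ‖z.2‖ₑ ^ (β - s)) (by fun_prop) hS
  · exact Measurable.indicator (s := {z : E × E | z.2 ∈ S z.1})
      (f := fun z => ‖z.2‖ₑ ^ s) (by fun_prop) hS
  · filter_upwards [Measure.ae_ne μ 0] with x hx
    refine (lintegral_indicator_enorm_rpow_le hpp' (hSx x) hx _ (hsec x hx)).trans_eq ?_
    rw [hA]
  · refine .of_forall fun x => .of_forall fun y => ?_
    by_cases hy : y ∈ S x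
    · rw [indicator_of_mem hy, ENNReal.rpow_mul, ← ENNReal.mul_rpow_of_nonneg _ _ hp.le]
      gcongr
      exact hcmp x y hy
    · simp [indicator_of_notMem hy, hp]
  · filter_upwards [Measure.ae_ne μ 0] with y hy
    refine (lintegral_schur_weight_mul_indicator_le hp hpq hα finrank_pos.ne' _ _
      (t := {x | y ∈ S x}) (measurable_prodMk_right hS) hy (hdual y hy)).trans_eq ?_
    simp only [ENNReal.coe_mul, ENNReal.coe_rpow_of_nonneg _ hqp,
      ENNReal.coe_rpow_of_nonneg _ hq.le, ENNReal.coe_rpow_of_nonneg _ hp.le,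
      ENNReal.coe_rpow_of_nonneg _ (one_div_pos.2 hp').le]

lemma hasStrongType_hardyOp_ball [Nontrivial E] (hc : 0 < c) (hp : 1 < p) (hpq : p ≤ q)
    (hα : 1 / q = 1 / p - α / finrank ℝ E) (hβ : 1 / p < 1 + β / finrank ℝ E) :
    HasStrongType (hardyOp μ α β fun x => ball 0 (c * ‖x‖)) p q μ μ := by
  have hpp' := Real.HolderConjugate.conjExponent hp
  have hp' := hpp'.symm.pos
  set p' := p.conjExponent
  have hd : (0 : ℝ) < finrank ℝ E := by exact_mod_cast finrank_pos (R := ℝ) (M := E)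
  obtain ⟨s, hs0, hs⟩ : ∃ s, 0 < s ∧ -(finrank ℝ E : ℝ) < (β - s) * p' := by
    have hσ : (β - (β + finrank ℝ E / p') / 2) * p' + finrank ℝ E =
        (β + finrank ℝ E / p') / 2 * p' := by field_simp; ring
    have : 0 < β + finrank ℝ E / p' := by
      have := mul_lt_mul_of_pos_left hβ hd
      have := hpp'.inv_add_inv_eq_one
      field_simp at *
      nlinarith
    exact ⟨(β + finrank ℝ E / p') / 2, by linarith, by nlinarith⟩
  obtain ⟨C, hC⟩ := exists_setLIntegral_closedBall_enorm_rpow_le μ hs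
  obtain ⟨D, hD⟩ := exists_setLIntegral_compl_ball_enorm_rpow_le μ
    (show -(s * p) - finrank ℝ E < -(finrank ℝ E : ℝ) by nlinarith)
  refine hasStrongType_hardyOp_of_schur μ hpp' hpq hα (measurableSet_mem_ball_mul_norm c) (s := s)
    (C₁ := C * c.toNNReal ^ ((β - s) * p' + finrank ℝ E)) (C₂ := c.toNNReal ^ s)
    (C₃ := D * c⁻¹.toNNReal ^ (-(s * p))) (fun x hx => ?_) (fun x y hy => ?_) (fun y hy => ?_)
  · rw [ENNReal.coe_mul, mul_assoc, ← ofReal_mul_norm_rpow hc]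
    exact (lintegral_mono_set ball_subset_closedBall).trans (hC _ (by positivity))
  · rw [← ofReal_mul_norm_rpow hc, ← ofReal_norm]
    gcongr
    exact (mem_ball_zero_iff.1 hy).le
  · rw [ENNReal.coe_mul, mul_assoc, ← ofReal_mul_norm_rpow (inv_pos.2 hc)]
    refine (lintegral_mono_set fun x hx => ?_).trans
      ((hD _ (show 0 < c⁻¹ * ‖y‖ by positivity)).trans_eq (by rw [sub_add_cancel]))
    rw [mem_compl_iff, mem_ball_zero_iff, not_lt, inv_mul_le_iff₀ hc]
    exact (mem_ball_zero_iff.1 hx).le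

lemma hasStrongType_hardyOp_compl_ball [Nontrivial E] (hc : 0 < c) (hp : 1 < p) (hpq : p ≤ q)
    (hα : 1 / q = 1 / p - α / finrank ℝ E) (hβ : 1 + β / finrank ℝ E < 1 / p) :
    HasStrongType (hardyOp μ α β fun x => (ball 0 (c * ‖x‖))ᶜ) p q μ μ := by
  have hpp' := Real.HolderConjugate.conjExponent hp
  have hp' := hpp'.symm.pos
  set p' := p.conjExponent
  have hd : (0 : ℝ) < finrank ℝ E := by exact_mod_cast finrank_pos (R := ℝ) (M := E)
  obtain ⟨s, hs0, hs⟩ : ∃ s, s < 0 ∧ (β - s) * p' < -(finrank ℝ E : ℝ) := by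
    have hσ : (β - (β + finrank ℝ E / p') / 2) * p' + finrank ℝ E =
        (β + finrank ℝ E / p') / 2 * p' := by field_simp; ring
    have : β + finrank ℝ E / p' < 0 := by
      have := mul_lt_mul_of_pos_left hβ hd
      have := hpp'.inv_add_inv_eq_one
      field_simp at *
      nlinarith
    exact ⟨(β + finrank ℝ E / p') / 2, by linarith, by nlinarith⟩
  obtain ⟨C, hC⟩ := exists_setLIntegral_compl_ball_enorm_rpow_le μ hs
  obtain ⟨D, hD⟩ := exists_setLIntegral_closedBall_enorm_rpow_le μ
    (show -(finrank ℝ E : ℝ) < -(s * p) - finrank ℝ E by nlinarith)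
  refine hasStrongType_hardyOp_of_schur μ hpp' hpq hα (measurableSet_mem_ball_mul_norm c).compl
    (s := s) (C₁ := C * c.toNNReal ^ ((β - s) * p' + finrank ℝ E)) (C₂ := c.toNNReal ^ s)
    (C₃ := D * c⁻¹.toNNReal ^ (-(s * p))) (fun x hx => ?_) (fun x y hy => ?_) (fun y hy => ?_)
  · rw [ENNReal.coe_mul, mul_assoc, ← ofReal_mul_norm_rpow hc]
    exact hC _ (by positivity)
  · rw [← ofReal_mul_norm_rpow hc, ← ofReal_norm]
    exact ennreal_rpow_le_rpow_of_nonpos hs0.le (ENNReal.ofReal_le_ofReal (by simpa using hy))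
  · rw [ENNReal.coe_mul, mul_assoc, ← ofReal_mul_norm_rpow (inv_pos.2 hc)]
    refine (lintegral_mono_set fun x hx => ?_).trans
      ((hD _ (show 0 < c⁻¹ * ‖y‖ by positivity)).trans_eq (by rw [sub_add_cancel]))
    rw [mem_closedBall_zero_iff, le_inv_mul_iff₀ hc]
    simpa using hx

end HardyOperators

section NewtonKernel

lemma abs_inv_norm_pow_sub_inv_norm_pow_le {E : Type*} [NormedAddCommGroup E] {u v : E} (hu : u ≠ 0)
    (huv : ‖u‖ ≤ 2 * ‖v‖) (hvu : ‖v‖ ≤ 2 * ‖u‖) (m : ℕ) :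
    |(‖v‖ ^ m)⁻¹ - (‖u‖ ^ m)⁻¹| * ‖u‖ ≤ m * 2 ^ m * ‖v - u‖ * (‖v‖ ^ m)⁻¹ := by
  have hu0 : 0 < ‖u‖ := norm_pos_iff.2 hu
  have hv0 : 0 < ‖v‖ := by linarith
  have hmul : (m : ℝ) * (2 * ‖u‖) ^ (m - 1) * ‖u‖ ≤ m * 2 ^ m * ‖u‖ ^ m := by
    rcases m with - | m
    · simp
    · rw [Nat.add_sub_cancel, mul_pow, pow_succ, pow_succ]
      have : 0 ≤ (m + 1 : ℕ) * (2 ^ m * ‖u‖ ^ m * ‖u‖) := by positivity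
      linarith
  calc |(‖v‖ ^ m)⁻¹ - (‖u‖ ^ m)⁻¹| * ‖u‖
      = |‖u‖ ^ m - ‖v‖ ^ m| * ‖u‖ * ((‖v‖ ^ m)⁻¹ * (‖u‖ ^ m)⁻¹) := by
        rw [inv_sub_inv (by positivity) (by positivity), abs_div,
          abs_of_pos (show 0 < ‖v‖ ^ m * ‖u‖ ^ m by positivity)]
        field_simp
    _ ≤ ‖v - u‖ * m * (2 * ‖u‖) ^ (m - 1) * ‖u‖ * ((‖v‖ ^ m)⁻¹ * (‖u‖ ^ m)⁻¹) := by
        gcongr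
        refine (abs_pow_sub_pow_le _ _ _).trans ?_
        rw [abs_norm, abs_norm, norm_sub_rev]
        gcongr
        · exact abs_norm_sub_norm_le u v
        · exact max_le (by linarith) hvu
    _ ≤ ‖v - u‖ * (m * 2 ^ m * ‖u‖ ^ m) * ((‖v‖ ^ m)⁻¹ * (‖u‖ ^ m)⁻¹) := by
        refine mul_le_mul_of_nonneg_right ?_ (by positivity)
        linear_combination ‖v - u‖ * hmul
    _ = m * 2 ^ m * ‖v - u‖ * (‖v‖ ^ m)⁻¹ := by field_simp

variable {E : Type*} [NormedAddCommGroup E] [NormedSpace ℝ E]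

/-- The kernel `z / |z| ^ d` on a space of dimension `d`: up to a constant, the gradient of the
fundamental solution of the Laplacian. -/
def newtonKernel (z : E) : E :=
  (‖z‖ ^ finrank ℝ E)⁻¹ • z

lemma enorm_newtonKernel_le (z : E) : ‖newtonKernel z‖ₑ ≤ ‖z‖ₑ ^ (1 - finrank ℝ E : ℝ) := by
  rcases eq_or_ne z 0 with rfl | hz
  · simp [newtonKernel]
  · have hz0 : ‖z‖ₑ ≠ 0 := by simpa using hz
    rw [newtonKernel, enorm_smul, enorm_inv (by positivity), enorm_pow, enorm_norm,
      ENNReal.rpow_sub _ _ hz0 enorm_ne_top, ENNReal.rpow_one, ENNReal.rpow_natCast,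
      div_eq_mul_inv, mul_comm]

lemma norm_newtonKernel_sub_sub_le {x y : E} (hx : x ≠ 0) (hy : 2 * ‖y‖ ≤ ‖x‖) :
    ‖newtonKernel (x - y) - newtonKernel x‖ ≤
      (1 + finrank ℝ E * 2 ^ finrank ℝ E) * 2 ^ finrank ℝ E * (‖y‖ * (‖x‖ ^ finrank ℝ E)⁻¹) := by
  set m := finrank ℝ E
  have hx0 : 0 < ‖x‖ := norm_pos_iff.2 hx
  have hlower : ‖x‖ ≤ 2 * ‖x - y‖ := by linarith [norm_sub_norm_le x y]
  have hupper : ‖x - y‖ ≤ 2 * ‖x‖ := by linarith [norm_sub_le x y, norm_nonneg y]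
  calc ‖newtonKernel (x - y) - newtonKernel x‖
      = ‖(‖x - y‖ ^ m)⁻¹ • (-y) + ((‖x - y‖ ^ m)⁻¹ - (‖x‖ ^ m)⁻¹) • x‖ := by
        simp only [newtonKernel, smul_sub, smul_neg, sub_smul]
        congr 1
        abel
    _ ≤ (‖x - y‖ ^ m)⁻¹ * ‖y‖ + |(‖x - y‖ ^ m)⁻¹ - (‖x‖ ^ m)⁻¹| * ‖x‖ := by
        refine (norm_add_le _ _).trans_eq ?_
        rw [norm_smul, norm_smul, norm_neg, norm_eq_abs, norm_eq_abs,
          abs_of_nonneg (a := (‖x - y‖ ^ m)⁻¹) (by positivity)]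
    _ ≤ (‖x - y‖ ^ m)⁻¹ * ‖y‖ + m * 2 ^ m * ‖y‖ * (‖x - y‖ ^ m)⁻¹ := by
        gcongr (‖x - y‖ ^ m)⁻¹ * ‖y‖ + ?_
        simpa using abs_inv_norm_pow_sub_inv_norm_pow_le hx hlower hupper m
    _ = (1 + m * 2 ^ m) * ‖y‖ * (‖x - y‖ ^ m)⁻¹ := by ring
    _ ≤ (1 + m * 2 ^ m) * ‖y‖ * ((‖x‖ / 2) ^ m)⁻¹ := by
        gcongr
        linarith
    _ = (1 + m * 2 ^ m) * 2 ^ m * (‖y‖ * (‖x‖ ^ m)⁻¹) := by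
        rw [div_pow, inv_div]; ring

lemma exists_enorm_newtonKernel_sub_sub_le : ∃ C : ℝ≥0, ∀ x y : E, x ≠ 0 → 2 * ‖y‖ ≤ ‖x‖ →
    ‖newtonKernel (x - y) - newtonKernel x‖ₑ ≤ C * (‖y‖ₑ * ‖x‖ₑ ^ (-finrank ℝ E : ℝ)) := by
  set m := finrank ℝ E
  refine ⟨((1 + m * 2 ^ m) * 2 ^ m : ℕ), fun x y hx hy => ?_⟩
  have hx0 : 0 < ‖x‖ := norm_pos_iff.2 hx
  calc ‖newtonKernel (x - y) - newtonKernel x‖ₑ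
      = ENNReal.ofReal ‖newtonKernel (x - y) - newtonKernel x‖ := (ofReal_norm _).symm
    _ ≤ ENNReal.ofReal (((1 + m * 2 ^ m) * 2 ^ m : ℕ) * (‖y‖ * (‖x‖ ^ m)⁻¹)) := by
        gcongr
        exact_mod_cast norm_newtonKernel_sub_sub_le hx hy
    _ = ((1 + m * 2 ^ m) * 2 ^ m : ℕ) * (‖y‖ₑ * ‖x‖ₑ ^ (-m : ℝ)) := by
        rw [ENNReal.ofReal_mul (Nat.cast_nonneg _), ENNReal.ofReal_mul (norm_nonneg y),
          ENNReal.ofReal_natCast, ENNReal.ofReal_inv_of_pos (by positivity),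
          ENNReal.ofReal_pow hx0.le, ofReal_norm, ofReal_norm, ENNReal.rpow_neg,
          ENNReal.rpow_natCast]

end NewtonKernel

section NewtonField

variable {E : Type*} [NormedAddCommGroup E] [NormedSpace ℝ E] [MeasurableSpace E]

/-- The convolution of a density with `newtonKernel`: up to a constant, the field `∇Δ⁻¹a`. -/
def newtonField (μ : Measure E) (a : E → ℝ) (x : E) : E :=
  ∫ y, a y • newtonKernel (x - y) ∂μ

variable {μ : Measure E} {a : E → ℝ}

lemma enorm_newtonField_le (μ : Measure E) (a : E → ℝ) (x : E) :
    ‖newtonField μ a x‖ₑ ≤ ∫⁻ y, ‖newtonKernel (x - y)‖ₑ * ‖a y‖ₑ ∂μ := by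
  refine (enorm_integral_le_lintegral_enorm _).trans_eq ?_
  simp only [enorm_smul, mul_comm]

lemma enorm_newtonField_le_of_integral_eq_zero [CompleteSpace E] (ha : Integrable a μ)
    (ha0 : ∫ y, a y ∂μ = 0) (x : E) :
    ‖newtonField μ a x‖ₑ ≤ ∫⁻ y, ‖newtonKernel (x - y) - newtonKernel x‖ₑ * ‖a y‖ₑ ∂μ := by
  by_cases hint : Integrable (fun y => a y • newtonKernel (x - y)) μ
  · have hsub : newtonField μ a x = ∫ y, a y • (newtonKernel (x - y) - newtonKernel x) ∂μ := by
      simp only [smul_sub]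
      rw [integral_sub hint (ha.smul_const _), integral_smul_const, ha0, zero_smul, sub_zero,
        newtonField]
    rw [hsub]
    refine (enorm_integral_le_lintegral_enorm _).trans_eq ?_
    simp only [enorm_smul, mul_comm]
  · simp [newtonField, integral_undef hint]

end NewtonField

section WeightedNewtonField

lemma rpow_le_two_rpow_mul {n : ℝ} (hn : 0 ≤ n) {a b : ℝ≥0∞} (hab : a ≤ 2 * b) :
    a ^ n ≤ 2 ^ n * b ^ n := by
  rw [← ENNReal.mul_rpow_of_nonneg _ _ hn]
  gcongr

lemma one_add_enorm_rpow_le {E : Type*} [SeminormedAddCommGroup E] {n : ℝ} (hn : 0 ≤ n) {x : E}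
    (hx : 1 ≤ ‖x‖ₑ) : (1 + ‖x‖ₑ) ^ n ≤ 2 ^ n * ‖x‖ₑ ^ n :=
  rpow_le_two_rpow_mul hn (by rw [two_mul]; gcongr)

lemma enorm_rpow_le_rpow_sub_mul {E : Type*} [NormedAddCommGroup E] {n : ℝ} (hn : 0 ≤ n) {y : E}
    (hy : y ≠ 0) (s : ℝ) : ‖y‖ₑ ^ s ≤ ‖y‖ₑ ^ (s - n) * (1 + ‖y‖ₑ) ^ n := by
  calc ‖y‖ₑ ^ s = ‖y‖ₑ ^ (s - n) * ‖y‖ₑ ^ n := by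
        rw [← ENNReal.rpow_add _ _ (by simpa) enorm_ne_top, sub_add_cancel]
    _ ≤ ‖y‖ₑ ^ (s - n) * (1 + ‖y‖ₑ) ^ n := by
        gcongr
        exact le_add_self

variable {E : Type*} [NormedAddCommGroup E] [NormedSpace ℝ E] {n : ℝ}

lemma exists_weight_mul_enorm_newtonKernel_sub_sub_le (hn : 0 ≤ n) :
    ∃ C : ℝ≥0, ∀ x y : E, 1 ≤ ‖x‖ₑ → 2 * ‖y‖ ≤ ‖x‖ →
      (1 + ‖x‖ₑ) ^ n * ‖newtonKernel (x - y) - newtonKernel x‖ₑ ≤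
        C * (‖x‖ₑ ^ (1 - finrank ℝ E - (1 - n)) * (‖y‖ₑ ^ (1 - n) * (1 + ‖y‖ₑ) ^ n)) := by
  obtain ⟨C, hC⟩ := exists_enorm_newtonKernel_sub_sub_le (E := E)
  refine ⟨2 ^ n * C, fun x y hx hy => ?_⟩
  rcases eq_or_ne y 0 with rfl | hy0
  · simp
  have hx0 : ‖x‖ₑ ≠ 0 := (zero_lt_one.trans_le hx).ne'
  calc (1 + ‖x‖ₑ) ^ n * ‖newtonKernel (x - y) - newtonKernel x‖ₑ
      ≤ (2 ^ n * ‖x‖ₑ ^ n) * (C * (‖y‖ₑ * ‖x‖ₑ ^ (-finrank ℝ E : ℝ))) := by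
        gcongr ?_ * ?_
        · exact one_add_enorm_rpow_le hn hx
        · exact hC x y (by simpa using hx0) hy
    _ = (2 ^ n * C) * (‖x‖ₑ ^ (1 - finrank ℝ E - (1 - n)) * ‖y‖ₑ) := by
        rw [show (1 - finrank ℝ E - (1 - n) : ℝ) = n + -finrank ℝ E by ring,
          ENNReal.rpow_add _ _ hx0 enorm_ne_top]
        ring
    _ ≤ (2 ^ n * C : ℝ≥0) *
          (‖x‖ₑ ^ (1 - finrank ℝ E - (1 - n)) * (‖y‖ₑ ^ (1 - n) * (1 + ‖y‖ₑ) ^ n)) := by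
        rw [ENNReal.coe_mul, ENNReal.coe_rpow_of_nonneg _ hn, ENNReal.coe_ofNat]
        gcongr
        simpa only [ENNReal.rpow_one] using enorm_rpow_le_rpow_sub_mul hn hy0 1

lemma weight_mul_enorm_newtonKernel_le (hn : 0 ≤ n) {x y : E}
    (hxy : 1 + ‖x‖ₑ ≤ 2 * (1 + ‖y‖ₑ)) :
    (1 + ‖x‖ₑ) ^ n * ‖newtonKernel (x - y)‖ₑ ≤
      2 ^ n * (‖x - y‖ₑ ^ (1 - finrank ℝ E : ℝ) * (1 + ‖y‖ₑ) ^ n) := by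
  calc (1 + ‖x‖ₑ) ^ n * ‖newtonKernel (x - y)‖ₑ
      ≤ (2 ^ n * (1 + ‖y‖ₑ) ^ n) * ‖x - y‖ₑ ^ (1 - finrank ℝ E : ℝ) := by
        gcongr ?_ * ?_
        · exact rpow_le_two_rpow_mul hn hxy
        · exact enorm_newtonKernel_le _
    _ = 2 ^ n * (‖x - y‖ₑ ^ (1 - finrank ℝ E : ℝ) * (1 + ‖y‖ₑ) ^ n) := by ring

lemma weight_mul_enorm_newtonKernel_sub_sub_le (hn : 0 ≤ n) {x y : E} (hx : 1 ≤ ‖x‖ₑ)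
    (hxy : ‖x‖ₑ ≤ 2 * ‖y‖ₑ) :
    (1 + ‖x‖ₑ) ^ n * ‖newtonKernel (x - y) - newtonKernel x‖ₑ ≤
      2 ^ n * (‖x - y‖ₑ ^ (1 - finrank ℝ E : ℝ) * (1 + ‖y‖ₑ) ^ n +
        ‖x‖ₑ ^ (1 - finrank ℝ E - -n) * (‖y‖ₑ ^ (-n) * (1 + ‖y‖ₑ) ^ n)) := by
  have hx0 : ‖x‖ₑ ≠ 0 := (zero_lt_one.trans_le hx).ne'
  have hy0 : y ≠ 0 := by
    rintro rfl
    simp_all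
  have hsum : 1 + ‖x‖ₑ ≤ 2 * (1 + ‖y‖ₑ) := by
    rw [mul_add, mul_one]
    gcongr
    exact one_le_two
  have hself : (1 + ‖x‖ₑ) ^ n * ‖newtonKernel x‖ₑ ≤
      2 ^ n * (‖x‖ₑ ^ (1 - finrank ℝ E - -n) * (‖y‖ₑ ^ (-n) * (1 + ‖y‖ₑ) ^ n)) := by
    calc (1 + ‖x‖ₑ) ^ n * ‖newtonKernel x‖ₑ
        ≤ (2 ^ n * ‖x‖ₑ ^ n) * ‖x‖ₑ ^ (1 - finrank ℝ E : ℝ) := by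
          gcongr ?_ * ?_
          · exact one_add_enorm_rpow_le hn hx
          · exact enorm_newtonKernel_le x
      _ = 2 ^ n * (‖x‖ₑ ^ (1 - finrank ℝ E - -n) * 1) := by
          rw [sub_neg_eq_add, ENNReal.rpow_add _ _ hx0 enorm_ne_top]
          ring
      _ ≤ _ := by
          gcongr
          simpa using enorm_rpow_le_rpow_sub_mul hn hy0 0
  calc (1 + ‖x‖ₑ) ^ n * ‖newtonKernel (x - y) - newtonKernel x‖ₑ
      ≤ (1 + ‖x‖ₑ) ^ n * ‖newtonKernel (x - y)‖ₑ + (1 + ‖x‖ₑ) ^ n * ‖newtonKernel x‖ₑ := by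
        rw [← mul_add]
        gcongr
        exact enorm_sub_le
    _ ≤ _ := by
        rw [mul_add]
        exact add_le_add (weight_mul_enorm_newtonKernel_le hn hsum) hself

variable [MeasurableSpace E]

/-- The sum of three positive operators which dominates the weighted `newtonField` of a density of
integral zero. -/
def newtonMajorant (μ : Measure E) (n : ℝ) : (E → ℝ≥0∞) → E → ℝ≥0∞ :=
  rieszPotential μ 1 + hardyOp μ 1 (1 - n) (fun x => ball 0 (2⁻¹ * ‖x‖)) +
    hardyOp μ 1 (-n) fun x => (ball 0 (2⁻¹ * ‖x‖))ᶜ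

variable {μ : Measure E} {a : E → ℝ}

lemma weight_mul_enorm_newtonField_le_of_le_one (hn : 0 ≤ n) {x : E} (hx : ‖x‖ₑ ≤ 1) :
    (1 + ‖x‖ₑ) ^ n * ‖newtonField μ a x‖ₑ ≤
      2 ^ n * rieszPotential μ 1 (fun y => (1 + ‖y‖ₑ) ^ n * ‖a y‖ₑ) x := by
  have hw : (1 + ‖x‖ₑ) ^ n ≠ ∞ := by finiteness
  calc (1 + ‖x‖ₑ) ^ n * ‖newtonField μ a x‖ₑ
      ≤ (1 + ‖x‖ₑ) ^ n * ∫⁻ y, ‖newtonKernel (x - y)‖ₑ * ‖a y‖ₑ ∂μ := by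
        gcongr
        exact enorm_newtonField_le μ a x
    _ = ∫⁻ y, (1 + ‖x‖ₑ) ^ n * ‖newtonKernel (x - y)‖ₑ * ‖a y‖ₑ ∂μ := by
        simp only [← lintegral_const_mul' _ _ hw, mul_assoc]
    _ ≤ ∫⁻ y, 2 ^ n * (‖x - y‖ₑ ^ (1 - finrank ℝ E : ℝ) * (1 + ‖y‖ₑ) ^ n) * ‖a y‖ₑ ∂μ := by
        gcongr ∫⁻ y, ?_ * ‖a y‖ₑ ∂μ with y
        refine weight_mul_enorm_newtonKernel_le hn ?_
        calc 1 + ‖x‖ₑ ≤ 2 * 1 := by rw [two_mul]; gcongr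
          _ ≤ 2 * (1 + ‖y‖ₑ) := by gcongr; exact le_self_add
    _ = 2 ^ n * rieszPotential μ 1 (fun y => (1 + ‖y‖ₑ) ^ n * ‖a y‖ₑ) x := by
        rw [rieszPotential, ← lintegral_const_mul' _ _ (by finiteness)]
        simp only [mul_assoc]

lemma exists_weight_mul_setLIntegral_ball_le [OpensMeasurableSpace E] (hn : 0 ≤ n) :
    ∃ C : ℝ≥0, ∀ (a : E → ℝ) (x : E), 1 ≤ ‖x‖ₑ →
      (1 + ‖x‖ₑ) ^ n * ∫⁻ y in ball 0 (2⁻¹ * ‖x‖),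
          ‖newtonKernel (x - y) - newtonKernel x‖ₑ * ‖a y‖ₑ ∂μ ≤
        C * hardyOp μ 1 (1 - n) (fun x => ball 0 (2⁻¹ * ‖x‖))
          (fun y => (1 + ‖y‖ₑ) ^ n * ‖a y‖ₑ) x := by
  obtain ⟨C, hC⟩ := exists_weight_mul_enorm_newtonKernel_sub_sub_le (E := E) hn
  refine ⟨C, fun a x hx => ?_⟩
  have : ‖x‖ₑ ≠ 0 := (zero_lt_one.trans_le hx).ne'
  simp only [hardyOp]
  rw [← lintegral_const_mul' _ _ (by finiteness), ← lintegral_const_mul' _ _ (by finiteness),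
    ← lintegral_const_mul' _ _ (by finiteness)]
  refine setLIntegral_mono' measurableSet_ball fun y hy => ?_
  have hxy : 2 * ‖y‖ ≤ ‖x‖ := by linarith [mem_ball_zero_iff.1 hy]
  calc _ = (1 + ‖x‖ₑ) ^ n * ‖newtonKernel (x - y) - newtonKernel x‖ₑ * ‖a y‖ₑ := by ring
    _ ≤ C * (‖x‖ₑ ^ (1 - finrank ℝ E - (1 - n)) * (‖y‖ₑ ^ (1 - n) * (1 + ‖y‖ₑ) ^ n)) * ‖a y‖ₑ := by
        gcongr ?_ * ‖a y‖ₑ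
        exact hC x y hx hxy
    _ = _ := by ring

lemma weight_mul_setLIntegral_compl_ball_le [BorelSpace E] [FiniteDimensional ℝ E]
    (hn : 0 ≤ n) (ha : Measurable a) {x : E} (hx : 1 ≤ ‖x‖ₑ) :
    (1 + ‖x‖ₑ) ^ n * ∫⁻ y in (ball 0 (2⁻¹ * ‖x‖))ᶜ,
        ‖newtonKernel (x - y) - newtonKernel x‖ₑ * ‖a y‖ₑ ∂μ ≤
      2 ^ n * (rieszPotential μ 1 (fun y => (1 + ‖y‖ₑ) ^ n * ‖a y‖ₑ) x +
        hardyOp μ 1 (-n) (fun x => (ball 0 (2⁻¹ * ‖x‖))ᶜ)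
          (fun y => (1 + ‖y‖ₑ) ^ n * ‖a y‖ₑ) x) := by
  have : ‖x‖ₑ ≠ 0 := (zero_lt_one.trans_le hx).ne'
  simp only [rieszPotential, hardyOp]
  rw [← lintegral_const_mul' _ _ (by finiteness), ← lintegral_const_mul' _ _ (by finiteness)]
  calc _ ≤ ∫⁻ y in (ball 0 (2⁻¹ * ‖x‖))ᶜ, 2 ^ n *
          (‖x - y‖ₑ ^ (1 - finrank ℝ E : ℝ) * ((1 + ‖y‖ₑ) ^ n * ‖a y‖ₑ) +
            ‖x‖ₑ ^ (1 - finrank ℝ E - -n) * (‖y‖ₑ ^ (-n) * ((1 + ‖y‖ₑ) ^ n * ‖a y‖ₑ))) ∂μ := by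
        refine setLIntegral_mono' measurableSet_ball.compl fun y hy => ?_
        have hxy : ‖x‖ ≤ 2 * ‖y‖ := by
          rw [mem_compl_iff, mem_ball_zero_iff] at hy
          linarith
        have hxy' : ‖x‖ₑ ≤ 2 * ‖y‖ₑ := by
          simpa [ENNReal.ofReal_mul] using ENNReal.ofReal_le_ofReal hxy
        rw [← mul_assoc]
        refine (mul_le_mul_left (weight_mul_enorm_newtonKernel_sub_sub_le hn hx hxy') _).trans_eq ?_
        ring
    _ ≤ _ := by
        rw [lintegral_const_mul' _ _ (by finiteness), lintegral_add_left (by fun_prop)]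
        gcongr
        exact Measure.restrict_le_self

theorem exists_weight_mul_enorm_newtonField_le [BorelSpace E] [FiniteDimensional ℝ E]
    (μ : Measure E) (hn : 0 ≤ n) :
    ∃ C : ℝ≥0, ∀ a : E → ℝ, Measurable a → Integrable a μ → ∫ y, a y ∂μ = 0 → ∀ x,
      (1 + ‖x‖ₑ) ^ n * ‖newtonField μ a x‖ₑ ≤
        C * newtonMajorant μ n (fun y => (1 + ‖y‖ₑ) ^ n * ‖a y‖ₑ) x := by
  obtain ⟨C, hC⟩ := exists_weight_mul_setLIntegral_ball_le (μ := μ) hn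
  refine ⟨2 ^ n + C, fun a ham ha ha0 x => ?_⟩
  set f : E → ℝ≥0∞ := fun y => (1 + ‖y‖ₑ) ^ n * ‖a y‖ₑ
  simp only [newtonMajorant, Pi.add_apply, ENNReal.coe_add, ENNReal.coe_rpow_of_nonneg _ hn,
    ENNReal.coe_ofNat]
  rcases le_total ‖x‖ₑ 1 with hx | hx
  · refine (weight_mul_enorm_newtonField_le_of_le_one hn hx).trans ?_
    gcongr
    · exact le_self_add
    · exact le_add_right le_self_add
  · calc (1 + ‖x‖ₑ) ^ n * ‖newtonField μ a x‖ₑ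
        ≤ (1 + ‖x‖ₑ) ^ n * ∫⁻ y, ‖newtonKernel (x - y) - newtonKernel x‖ₑ * ‖a y‖ₑ ∂μ := by
          gcongr
          exact enorm_newtonField_le_of_integral_eq_zero ha ha0 x
      _ ≤ C * hardyOp μ 1 (1 - n) (fun x => ball 0 (2⁻¹ * ‖x‖)) f x +
            2 ^ n * (rieszPotential μ 1 f x +
              hardyOp μ 1 (-n) (fun x => (ball 0 (2⁻¹ * ‖x‖))ᶜ) f x) := by
          rw [← lintegral_add_compl _ (measurableSet_ball (x := (0 : E)) (ε := 2⁻¹ * ‖x‖)),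
            mul_add]
          exact add_le_add (hC a x hx) (weight_mul_setLIntegral_compl_ball_le hn ham hx)
      _ ≤ (2 ^ n + C) * hardyOp μ 1 (1 - n) (fun x => ball 0 (2⁻¹ * ‖x‖)) f x +
            (2 ^ n + C) * (rieszPotential μ 1 f x +
              hardyOp μ 1 (-n) (fun x => (ball 0 (2⁻¹ * ‖x‖))ᶜ) f x) := by
          gcongr
          · exact le_add_self
          · exact le_self_add
      _ = _ := by ring

end WeightedNewtonField

section WeightedEstimate

lemma enorm_weight_mul {E : Type*} [SeminormedAddCommGroup E] {n : ℝ} (hn : 0 ≤ n) (x : E)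
    (b : ℝ) : ‖(1 + ‖x‖) ^ n * b‖ₑ = (1 + ‖x‖ₑ) ^ n * ‖b‖ₑ := by
  rw [enorm_mul, Real.enorm_of_nonneg (by positivity), ← ENNReal.ofReal_rpow_of_nonneg
    (by positivity) hn, ENNReal.ofReal_add zero_le_one (norm_nonneg x), ENNReal.ofReal_one,
    ofReal_norm]

variable {E : Type*} [NormedAddCommGroup E] [NormedSpace ℝ E] [MeasurableSpace E]

lemma newtonField_congr_ae {μ : Measure E} {a b : E → ℝ} (hab : a =ᵐ[μ] b) :
    newtonField μ a = newtonField μ b := by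
  funext x
  refine integral_congr_ae ?_
  filter_upwards [hab] with y hy
  rw [hy]

variable [FiniteDimensional ℝ E] [Nontrivial E] [BorelSpace E] (μ : Measure E) [μ.IsAddHaarMeasure]
  {n p q : ℝ}

lemma hasStrongType_newtonMajorant (hp : 1 < p) (hpq : p < q)
    (hrel : 1 / q = 1 / p - 1 / finrank ℝ E) (hlo : 1 - n / finrank ℝ E < 1 / p)
    (hhi : 1 / p < 1 + (1 - n) / finrank ℝ E) :
    HasStrongType (newtonMajorant μ n) p q μ μ := by
  have hq : 1 ≤ q := (hp.trans hpq).le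
  refine .add hq (.add hq ?_ ?_) ?_
  · exact hasStrongType_rieszPotential μ hp hpq hrel
  · exact hasStrongType_hardyOp_ball μ (by norm_num) hp hpq.le hrel hhi
  · exact hasStrongType_hardyOp_compl_ball μ (by norm_num) hp hpq.le hrel (by rwa [neg_div])

theorem exists_eLpNorm_weight_mul_newtonField_le (hp : 1 < p) (hpq : p < q)
    (hrel : 1 / q = 1 / p - 1 / finrank ℝ E) (hlo : 1 - n / finrank ℝ E < 1 / p)
    (hhi : 1 / p < 1 + (1 - n) / finrank ℝ E) :
    ∃ C : ℝ≥0, ∀ a : E → ℝ, Integrable a μ → ∫ y, a y ∂μ = 0 →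
      eLpNorm (fun x => (1 + ‖x‖) ^ n * ‖newtonField μ a x‖) (ENNReal.ofReal q) μ ≤
        C * eLpNorm (fun x => (1 + ‖x‖) ^ n * a x) (ENNReal.ofReal p) μ := by
  have hn : 0 ≤ n := by
    have hp1 : 1 / p < 1 := by rw [div_lt_one] <;> linarith
    by_contra! hneg
    linarith [div_nonpos_of_nonpos_of_nonneg hneg.le (Nat.cast_nonneg (α := ℝ) (finrank ℝ E))]
  obtain ⟨C, hC⟩ := exists_weight_mul_enorm_newtonField_le μ hn
  obtain ⟨D, hD⟩ := hasStrongType_newtonMajorant μ hp hpq hrel hlo hhi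
  refine ⟨C * D, fun a ha ha0 => ?_⟩
  wlog ham : Measurable a generalizing a
  · obtain ⟨b, hb, hab⟩ := ha.aestronglyMeasurable
    have hwab : (fun x => (1 + ‖x‖) ^ n * a x) =ᵐ[μ] fun x => (1 + ‖x‖) ^ n * b x :=
      .mul .rfl hab
    rw [newtonField_congr_ae hab, eLpNorm_congr_ae hwab]
    exact this b (ha.congr hab) (integral_congr_ae hab ▸ ha0) hb.measurable
  set f : E → ℝ≥0∞ := fun x => (1 + ‖x‖ₑ) ^ n * ‖a x‖ₑ
  have hfa : eLpNorm f (ENNReal.ofReal p) μ =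
      eLpNorm (fun x => (1 + ‖x‖) ^ n * a x) (ENNReal.ofReal p) μ :=
    eLpNorm_congr_enorm_ae (.of_forall fun x => by rw [enorm_weight_mul hn, enorm_eq_self])
  calc eLpNorm (fun x => (1 + ‖x‖) ^ n * ‖newtonField μ a x‖) (ENNReal.ofReal q) μ
      ≤ C * eLpNorm (newtonMajorant μ n f) (ENNReal.ofReal q) μ := by
        refine eLpNorm_le_mul_eLpNorm_of_ae_le_mul' (.of_forall fun x => ?_) _
        rw [enorm_weight_mul hn, enorm_norm, enorm_eq_self]
        exact hC a ham ha ha0 x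
    _ ≤ C * (D * eLpNorm f (ENNReal.ofReal p) μ) := by
        gcongr
        exact (hD f (by fun_prop)).2
    _ = (C * D : ℝ≥0) * eLpNorm (fun x => (1 + ‖x‖) ^ n * a x) (ENNReal.ofReal p) μ := by
        rw [ENNReal.coe_mul, mul_assoc, hfa]

end WeightedEstimate

lemma norm_PiOp_le (a : EuclideanSpace ℝ (Fin 3) → ℝ) (x : EuclideanSpace ℝ (Fin 3)) :
    ‖PiOp a x‖ ≤ ‖newtonField volume a x‖ := by
  have hPi : PiOp a x = (-(1 / (4 * π))) • newtonField volume a x := by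
    simp only [PiOp, newtonField, newtonKernel, finrank_euclideanSpace_fin, smul_smul,
      div_eq_mul_inv]
  rw [hPi, norm_smul, norm_neg, norm_of_nonneg (by positivity)]
  refine mul_le_of_le_one_left (norm_nonneg _) ?_
  rw [div_le_one (by positivity)]
  linarith [pi_gt_three]

theorem PiOp_weighted_zero_mass_general (n p₂ p₃ : ℝ) (hp3 : 1 < p₃) (hp32 : p₃ < p₂)
    (hrel : 1 / p₂ = 1 / p₃ - 1 / 3) (hlo : (3 - n) / 3 < 1 / p₃) (hhi : 1 / p₃ < (4 - n) / 3) :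
    ∃ C : ℝ, 0 < C ∧ ∀ a : EuclideanSpace ℝ (Fin 3) → ℝ, Integrable a → (∫ x, a x) = 0 →
      eLpNorm (fun x => (1 + ‖x‖) ^ n * ‖PiOp a x‖) (ENNReal.ofReal p₂) volume ≤
        ENNReal.ofReal C *
          eLpNorm (fun x => (1 + ‖x‖) ^ n * a x) (ENNReal.ofReal p₃) volume := by
  have hd : (finrank ℝ (EuclideanSpace ℝ (Fin 3)) : ℝ) = 3 := by simp
  obtain ⟨C, hC⟩ := exists_eLpNorm_weight_mul_newtonField_le
    (volume : Measure (EuclideanSpace ℝ (Fin 3))) (n := n) hp3 hp32 (by rw [hd, hrel])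
    (by rw [hd]; linarith) (by rw [hd]; linarith)
  refine ⟨C + 1, by positivity, fun a ha ha0 => ?_⟩
  calc eLpNorm (fun x => (1 + ‖x‖) ^ n * ‖PiOp a x‖) (ENNReal.ofReal p₂) volume
      ≤ eLpNorm (fun x => (1 + ‖x‖) ^ n * ‖newtonField volume a x‖) (ENNReal.ofReal p₂) volume := by
        refine eLpNorm_mono_real fun x => ?_
        rw [norm_of_nonneg (by positivity)]
        gcongr
        exact norm_PiOp_le a x
    _ ≤ C * eLpNorm (fun x => (1 + ‖x‖) ^ n * a x) (ENNReal.ofReal p₃) volume := hC a ha ha0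
    _ ≤ ENNReal.ofReal (C + 1) *
          eLpNorm (fun x => (1 + ‖x‖) ^ n * a x) (ENNReal.ofReal p₃) volume := by
        gcongr
        rw [← ENNReal.ofReal_coe_nnreal]
        gcongr
        exact le_add_of_nonneg_right zero_le_one

/-- Weighted estimate for `Π` under the zero-mass condition:
for `n ∈ [1,3)`, `1/p₂ = 1/p₃ - 1/3`, `(3-n)/3 < 1/p₃ < (4-n)/3`, and Schwartz `a`
with `∫ a = 0`, one has `‖(1+|x|)^n Πa‖_{L^{p₂}} ≤ C ‖(1+|x|)^n a‖_{L^{p₃}}`. -/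
theorem PiOp_weighted_zero_mass (n p₂ p₃ : ℝ) (hn1 : 1 ≤ n) (hn3 : n < 3)
    (hp3 : 1 < p₃) (hp32 : p₃ < p₂) (hrel : 1 / p₂ = 1 / p₃ - 1 / 3)
    (hlo : (3 - n) / 3 < 1 / p₃) (hhi : 1 / p₃ < (4 - n) / 3) :
    ∃ C : ℝ, 0 < C ∧ ∀ a : 𝓢(EuclideanSpace ℝ (Fin 3), ℝ),
      (∫ x, a x) = 0 →
      eLpNorm (fun x => (1 + ‖x‖) ^ n * ‖PiOp (⇑a) x‖) (ENNReal.ofReal p₂) volume ≤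
        ENNReal.ofReal C *
          eLpNorm (fun x => (1 + ‖x‖) ^ n * a x) (ENNReal.ofReal p₃) volume := by
  obtain ⟨C, hC, h⟩ := PiOp_weighted_zero_mass_general n p₂ p₃ hp3 hp32 hrel hlo hhi
  exact ⟨C, hC, fun a => h a a.integrable⟩
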